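/- Let p be an odd prime and d, r ≥ 1. If r ≤ d and r(p−1) is not of the form jd + 1 for any j = 1, 2, …, p−1, then there is no ℤ/p-equivariant continuous map from X_{d,p} = (Sᵈ)ᵖ ∖ L to the unit sphere S((Δʳ)^⊥) of the orthogonal complement of Δʳ in (ℝᵖ)ʳ. -/

import Mathlib

/-- The cyclic-shift action of the generator of `ℤ/p` on
`X_{d,p} = (Sᵈ)ᵖ ∖ L`, the `p`-fold product of the sphere minus the thin diagonal. -/
def deletedProductShift {p : ℕ} {E : Type*}
    (x : {f : ZMod p → E // ∃ k k', f k ≠ f k'}) :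
    {f : ZMod p → E // ∃ k k', f k ≠ f k'} :=
  ⟨fun k => x.1 (k + 1), by
    obtain ⟨k, k', h⟩ := x.2
    exact ⟨k - 1, k' - 1, by simpa using h⟩⟩

/-! Collapsing the outside of the open unit cube of `ℝᵈ` to a point turns a `ZMod p × d` matrix `x`
into a configuration of `p` points of the sphere, which is nonconstant if the rows of `x` differ
and one of them is small. In the space of these matrices, the periodic resolution of `ℤ/p` can be
realised by chains up to dimension `(p - 1) d - 1`, and opposite faces of the cube, which give the
same configuration, let the top cell of the cube extend it by one more dimension. An equivariant
map to matrices with zero column sums labels every `x` by the position of a largest entry of the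
image, so that on fine subdivisions the periodic resolution of dimension `(p - 1) d` is mapped to
the `r`-fold join of the boundary of a simplex with `p` vertices, whose dimension is
`(p - 1) r - 1`. The action on the join is free, so the periodic resolution stays exact on its
alternating chains; if `r ≤ d`, descending from a dimension where these vanish would make the
augmentation `1` a multiple of `p`. -/

/-! ### Formal sums of lists -/

/-- Formal `F`-linear combinations of lists of points, i.e. of ordered, possibly degenerate
simplices of all dimensions. The empty list is included, so that the complex is augmented, and a
list of length `n` is a simplex of dimension `n - 1`. -/
abbrev ListChain (F V : Type*) [CommRing F] := List V →₀ F

namespace ListChain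

section Algebra

variable {F : Type*} [CommRing F] {V W M : Type*} [AddCommGroup M] [Module F M]

theorem hom_ext {φ ψ : ListChain F V →ₗ[F] M}
    (h : ∀ l, φ (Finsupp.single l 1) = ψ (Finsupp.single l 1)) : φ = ψ :=
  Finsupp.lhom_ext' fun l => LinearMap.ext_ring (h l)

theorem map_mem_of_supported (φ : ListChain F V →ₗ[F] M) {S : Set (List V)} {N : Submodule F M}
    (h : ∀ l ∈ S, φ (Finsupp.single l 1) ∈ N) {c : ListChain F V}
    (hc : c ∈ Finsupp.supported F F S) : φ c ∈ N := by
  rw [Finsupp.supported_eq_span_single] at hc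
  refine (Submodule.span_le (p := N.comap φ)).2 ?_ hc
  rintro _ ⟨l, hl, rfl⟩
  exact h l hl

theorem map_eq_of_supported (φ ψ : ListChain F V →ₗ[F] M) {S : Set (List V)}
    (h : ∀ l ∈ S, φ (Finsupp.single l 1) = ψ (Finsupp.single l 1)) {c : ListChain F V}
    (hc : c ∈ Finsupp.supported F F S) : φ c = ψ c := by
  have : (φ - ψ) c ∈ (⊥ : Submodule F M) :=
    map_mem_of_supported (φ - ψ) (fun l hl => by simp [h l hl]) hc
  simpa [sub_eq_zero] using this

/-- Multiplication of the coefficient of each list by a given weight. -/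
noncomputable def weight (f : List V → F) : ListChain F V →ₗ[F] ListChain F V :=
  Finsupp.linearCombination F fun l => Finsupp.single l (f l)

@[simp] theorem weight_single (f : List V → F) (l : List V) (a : F) :
    weight f (Finsupp.single l a) = Finsupp.single l (a * f l) := by
  simp [weight]

theorem weight_mem_supported (f : List V → F) {S : Set (List V)} {c : ListChain F V}
    (hc : c ∈ Finsupp.supported F F S) : weight f c ∈ Finsupp.supported F F S :=
  map_mem_of_supported _ (fun l hl => by
    rw [weight_single]; exact Finsupp.single_mem_supported _ _ hl) hc

/-- The operator prepending a given vertex to every list. -/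
noncomputable def cone (v : V) : ListChain F V →ₗ[F] ListChain F V :=
  Finsupp.lmapDomain F F (List.cons v)

@[simp] theorem cone_single (v : V) (l : List V) (a : F) :
    cone v (Finsupp.single l a) = Finsupp.single (v :: l) a := by
  simp [cone]

theorem cone_mem_supported {v : V} {S T : Set (List V)} (h : ∀ l ∈ S, v :: l ∈ T)
    {c : ListChain F V} (hc : c ∈ Finsupp.supported F F S) :
    cone v c ∈ Finsupp.supported F F T :=
  map_mem_of_supported _ (fun l hl => by
    rw [cone_single]; exact Finsupp.single_mem_supported _ _ (h l hl)) hc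

theorem weight_cone (f : List V → F) (v : V) (c : ListChain F V) :
    weight f (cone v c) = cone v (weight (fun l => f (v :: l)) c) := by
  have : weight f ∘ₗ cone v = cone v ∘ₗ weight fun l => f (v :: l) := hom_ext fun l => by simp
  exact LinearMap.congr_fun this c

/-- The alternating sum of the faces of a list. -/
noncomputable def bdList (F : Type*) [CommRing F] : List V → ListChain F V
  | [] => 0
  | v :: l => Finsupp.single l 1 - cone v (bdList F l)

theorem bdList_mem_supported (l : List V) :
    bdList F l ∈ Finsupp.supported F F {l' | l'.length + 1 = l.length ∧ l' ⊆ l} := by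
  induction l with
  | nil => simp [bdList]
  | cons v l ih =>
    refine Submodule.sub_mem _ (Finsupp.single_mem_supported _ _ (by simp))
      (cone_mem_supported ?_ ih)
    rintro l' ⟨hlen, hsub⟩
    exact ⟨by simpa using hlen, List.cons_subset_cons _ hsub⟩

theorem length_induction {P : List V → Prop}
    (h : ∀ l, (∀ l' : List V, l'.length < l.length → P l') → P l) (l : List V) : P l :=
  (measure List.length).wf.induction l h

theorem hom_ext_of_bdList {φ ψ : ListChain F V →ₗ[F] M}
    (h : ∀ l, φ (bdList F l) = ψ (bdList F l) →
      φ (Finsupp.single l 1) = ψ (Finsupp.single l 1)) : φ = ψ :=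
  hom_ext fun l => by
    induction l using length_induction with
    | h l ih =>
      exact h l (map_eq_of_supported φ ψ (fun l' hl' => ih l' (Nat.lt_of_succ_le hl'.1.le))
        (bdList_mem_supported l))

/-- The boundary operator of the augmented complex: the boundary of a vertex is the empty list. -/
noncomputable def bd : ListChain F V →ₗ[F] ListChain F V :=
  Finsupp.linearCombination F (bdList F)

@[simp] theorem bd_single (l : List V) :
    bd (Finsupp.single l (1 : F)) = bdList F l := by
  simp [bd]

theorem bd_cone (v : V) (c : ListChain F V) : bd (cone v c) = c - cone v (bd c) := by
  have : bd ∘ₗ cone v = LinearMap.id - cone v ∘ₗ (bd : ListChain F V →ₗ[F] _) :=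
    hom_ext fun l => by simp [bdList]
  exact LinearMap.congr_fun this c

theorem bd_bdList (l : List V) : bd (bdList F l) = 0 := by
  induction l with
  | nil => simp [bdList]
  | cons v l ih => simp [bdList, bd_cone, ih]

@[simp] theorem bd_bd (c : ListChain F V) : bd (bd c) = 0 := by
  have : bd ∘ₗ bd = (0 : ListChain F V →ₗ[F] ListChain F V) :=
    hom_ext fun l => by simp [bd_bdList]
  exact LinearMap.congr_fun this c

/-- The homogeneous part spanned by the lists of length `n`. -/
noncomputable def homPart (n : ℕ) : ListChain F V →ₗ[F] ListChain F V :=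
  weight fun l => if l.length = n then 1 else 0

theorem homPart_of_mem {n : ℕ} {c : ListChain F V}
    (hc : c ∈ Finsupp.supported F F {l | l.length = n}) : homPart n c = c :=
  map_eq_of_supported _ LinearMap.id (fun l (hl : l.length = n) => by simp [homPart, hl]) hc

theorem homPart_of_mem_of_ne {m n : ℕ} (hmn : m ≠ n) {c : ListChain F V}
    (hc : c ∈ Finsupp.supported F F {l | l.length = m}) : homPart n c = 0 :=
  map_eq_of_supported _ 0 (fun l (hl : l.length = m) => by simp [homPart, hl, hmn]) hc

theorem homPart_mem (n : ℕ) (c : ListChain F V) :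
    homPart n c ∈ Finsupp.supported F F {l | l.length = n} := by
  refine map_mem_of_supported _ (fun l _ => ?_) (S := Set.univ) (by simp)
  by_cases h : l.length = n
  · rw [homPart_of_mem (Finsupp.single_mem_supported F 1 h)]
    exact Finsupp.single_mem_supported F 1 h
  · simp [homPart, h]

theorem bd_homPart_succ (n : ℕ) (c : ListChain F V) :
    bd (homPart (n + 1) c) = homPart n (bd c) := by
  have : bd ∘ₗ homPart (n + 1) = homPart n ∘ₗ (bd : ListChain F V →ₗ[F] _) := by
    refine hom_ext fun l => ?_
    have hbd : bdList F l ∈ Finsupp.supported F F {l' : List V | l'.length = l.length - 1} :=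
      Finsupp.supported_mono (fun l' hl' => Nat.eq_sub_of_add_eq hl'.1) (bdList_mem_supported l)
    simp only [LinearMap.comp_apply, bd_single]
    by_cases h : l.length = n + 1
    · rw [h, Nat.add_sub_cancel] at hbd
      rw [homPart_of_mem hbd, homPart_of_mem (Finsupp.single_mem_supported F 1 h), bd_single]
    · rw [homPart_of_mem_of_ne h (Finsupp.single_mem_supported F 1 rfl), map_zero]
      rcases l with - | ⟨v, l⟩
      · simp [bdList]
      · exact (homPart_of_mem_of_ne (by simpa using h) hbd).symm
  exact LinearMap.congr_fun this c

/-- The chain map induced by a map of vertices. -/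
noncomputable def push (f : V → W) : ListChain F V →ₗ[F] ListChain F W :=
  Finsupp.lmapDomain F F (List.map f)

@[simp] theorem push_single (f : V → W) (l : List V) (a : F) :
    push f (Finsupp.single l a) = Finsupp.single (l.map f) a := by
  simp [push]

theorem push_cone (f : V → W) (v : V) (c : ListChain F V) :
    push f (cone v c) = cone (f v) (push f c) := by
  have : push f ∘ₗ cone v = cone (f v) ∘ₗ (push f : ListChain F V →ₗ[F] _) :=
    hom_ext fun l => by simp
  exact LinearMap.congr_fun this c

theorem push_bdList (f : V → W) (l : List V) : push f (bdList F l) = bdList F (l.map f) := by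
  induction l with
  | nil => simp [bdList]
  | cons v l ih => simp [bdList, push_cone, ih]

theorem bd_push (f : V → W) (c : ListChain F V) : bd (push f c) = push f (bd c) := by
  have : bd ∘ₗ push f = push f ∘ₗ (bd : ListChain F V →ₗ[F] _) :=
    hom_ext fun l => by simp [push_bdList]
  exact LinearMap.congr_fun this c

theorem push_push {U : Type*} (g : W → U) (f : V → W) (c : ListChain F V) :
    push g (push f c) = push (g ∘ f) c := by
  have : push g ∘ₗ push f = (push (g ∘ f) : ListChain F V →ₗ[F] _) :=
    hom_ext fun l => by simp
  exact LinearMap.congr_fun this c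

theorem push_id (c : ListChain F V) : push id c = c := by
  have : push id = (LinearMap.id : ListChain F V →ₗ[F] _) := hom_ext fun l => by simp
  exact LinearMap.congr_fun this c

theorem push_mem_supported {f : V → W} {S : Set (List V)} {T : Set (List W)}
    (h : ∀ l ∈ S, l.map f ∈ T) {c : ListChain F V} (hc : c ∈ Finsupp.supported F F S) :
    push f c ∈ Finsupp.supported F F T :=
  map_mem_of_supported _ (fun l hl => by
    rw [push_single]; exact Finsupp.single_mem_supported _ _ (h l hl)) hc

theorem push_eq_push_of_supported {f g : V → W} {S : Set (List V)}
    (h : ∀ l ∈ S, ∀ v ∈ l, f v = g v) {c : ListChain F V} (hc : c ∈ Finsupp.supported F F S) :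
    push f c = push g c :=
  map_eq_of_supported _ _ (fun l hl => by
    rw [push_single, push_single, List.map_congr_left (h l hl)]) hc

/-- The alternating sum of the simplices `f v₀, …, f vᵢ, g vᵢ, …, g vₙ` of the prism over the list
`v₀, …, vₙ`. -/
noncomputable def prismList (F : Type*) [CommRing F] (f g : V → W) : List V → ListChain F W
  | [] => 0
  | v :: l => Finsupp.single (f v :: g v :: l.map g) 1 - cone (f v) (prismList F f g l)

theorem prismList_mem_supported (f g : V → W) (l : List V) :
    prismList F f g l ∈ Finsupp.supported F F
      {l' | l'.length = l.length + 1 ∧ ∀ x ∈ l', ∃ v ∈ l, x = f v ∨ x = g v} := by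
  induction l with
  | nil => simp [prismList]
  | cons v l ih =>
    refine Submodule.sub_mem _ (Finsupp.single_mem_supported _ _ ⟨by simp, ?_⟩)
      (cone_mem_supported ?_ ih)
    · intro x hx
      simp only [List.mem_cons, List.mem_map] at hx
      rcases hx with rfl | rfl | ⟨a, ha, rfl⟩
      · exact ⟨v, by simp⟩
      · exact ⟨v, by simp⟩
      · exact ⟨a, by simp [ha]⟩
    · rintro l' ⟨hlen, hl'⟩
      refine ⟨by simp [hlen], fun x hx => ?_⟩
      rcases List.mem_cons.1 hx with rfl | hx
      · exact ⟨v, by simp⟩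
      · obtain ⟨w, hw, h⟩ := hl' x hx
        exact ⟨w, by simp [hw], h⟩

/-- The prism operator, a chain homotopy between two induced chain maps. -/
noncomputable def prism (f g : V → W) : ListChain F V →ₗ[F] ListChain F W :=
  Finsupp.linearCombination F (prismList F f g)

@[simp] theorem prism_single (f g : V → W) (l : List V) :
    prism f g (Finsupp.single l (1 : F)) = prismList F f g l := by
  simp [prism]

theorem prism_cone (f g : V → W) (v : V) (c : ListChain F V) :
    prism f g (cone v c) = cone (f v) (cone (g v) (push g c)) - cone (f v) (prism f g c) := by
  have : prism f g ∘ₗ cone v = cone (f v) ∘ₗ cone (g v) ∘ₗ push g -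
      cone (f v) ∘ₗ (prism f g : ListChain F V →ₗ[F] _) :=
    hom_ext fun l => by simp [prismList]
  exact LinearMap.congr_fun this c

theorem bd_prism (f g : V → W) (c : ListChain F V) :
    bd (prism f g c) = push g c - push f c - prism f g (bd c) := by
  have : bd ∘ₗ prism f g = push g - push f - prism f g ∘ₗ (bd : ListChain F V →ₗ[F] _) := by
    refine hom_ext fun l => ?_
    induction l with
    | nil => simp [prismList, bdList]
    | cons v l ih =>
      simp only [LinearMap.coe_comp, Function.comp_apply, prism_single, LinearMap.sub_apply,
        push_single, bd_single] at ih ⊢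
      simp only [prismList, map_sub, bd_single, bdList, bd_cone, ih, push_bdList, prism_single,
        prism_cone, List.map_cons, cone_single]
      abel
  exact LinearMap.congr_fun this c

theorem push_prism {U U' : Type*} (f g : V → W) (f' g' : U → U') (a : V → U) (b : W → U')
    (hf : ∀ v, b (f v) = f' (a v)) (hg : ∀ v, b (g v) = g' (a v)) (c : ListChain F V) :
    push b (prism f g c) = prism f' g' (push a c) := by
  have : push b ∘ₗ prism f g = prism f' g' ∘ₗ (push a : ListChain F V →ₗ[F] _) := by
    refine hom_ext fun l => ?_
    simp only [LinearMap.coe_comp, Function.comp_apply, prism_single, push_single]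
    induction l with
    | nil => simp [prismList]
    | cons v l ih => simp [prismList, push_cone, ih, hf, hg, Function.comp_def]
  exact LinearMap.congr_fun this c

theorem prism_mem_supported_length (f g : V → W) {n : ℕ} {c : ListChain F V}
    (hc : c ∈ Finsupp.supported F F {l | l.length = n}) :
    prism f g c ∈ Finsupp.supported F F {l | l.length = n + 1} :=
  map_mem_of_supported _ (fun l (hl : l.length = n) => by
    rw [prism_single]
    exact Finsupp.supported_mono (fun l' hl' => hl'.1.trans (by rw [hl]))
      (prismList_mem_supported f g l)) hc

end Algebra

/-! ### Subdivision -/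

section Inside

variable {F : Type*} [CommRing F] {E E' : Type*} [AddCommGroup E] [Module ℝ E]
  [AddCommGroup E'] [Module ℝ E']

/-- The chains all of whose simplices have their convex hull inside `U`. -/
def inside (F : Type*) [CommRing F] (U : Set E) : Submodule F (ListChain F E) :=
  Finsupp.supported F F {l | convexHull ℝ {x | x ∈ l} ⊆ U}

theorem single_mem_inside {U : Set E} {l : List E} (h : convexHull ℝ {x | x ∈ l} ⊆ U) (a : F) :
    Finsupp.single l a ∈ inside F U :=
  Finsupp.single_mem_supported _ _ h

theorem nil_mem_inside (U : Set E) (a : F) : Finsupp.single [] a ∈ inside F U :=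
  single_mem_inside (by simp) a

theorem inside_le_supported_mem (U : Set E) :
    inside F U ≤ Finsupp.supported F F {l | ∀ v ∈ l, v ∈ U} :=
  Finsupp.supported_mono fun _ hl _ hv => hl (subset_convexHull ℝ _ hv)

theorem inside_mono {U U' : Set E} (h : U ⊆ U') : inside F U ≤ inside F U' :=
  Finsupp.supported_mono fun _ hl => hl.trans h

theorem inside_inter (U U' : Set E) : inside F (U ∩ U') = inside F U ⊓ inside F U' := by
  simp only [inside, ← Finsupp.supported_inter, Set.subset_inter_iff, Set.ofPred_and]

theorem bd_mem_inside {U : Set E} {c : ListChain F E} (h : c ∈ inside F U) :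
    bd c ∈ inside F U := by
  refine map_mem_of_supported _ (fun l hl => ?_) h
  rw [bd_single]
  exact Finsupp.supported_mono (fun l' hl' => (convexHull_mono hl'.2).trans hl)
    (bdList_mem_supported l)

theorem homPart_mem_inside (n : ℕ) {U : Set E} {c : ListChain F E} (h : c ∈ inside F U) :
    homPart n c ∈ inside F U :=
  weight_mem_supported _ h

theorem convexHull_map (f : E →ᵃ[ℝ] E') (l : List E) :
    convexHull ℝ {x | x ∈ l.map f} = f '' convexHull ℝ {x | x ∈ l} := by
  rw [AffineMap.image_convexHull]
  congr 1
  ext x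
  simp

theorem push_mem_inside {U : Set E} {U' : Set E'} (f : E →ᵃ[ℝ] E') (hf : Set.MapsTo f U U')
    {c : ListChain F E} (h : c ∈ inside F U) : push f c ∈ inside F U' := by
  refine push_mem_supported (fun l hl => ?_) h
  rw [Set.mem_ofPred, convexHull_map]
  exact Set.image_subset_iff.2 fun x hx => hf (hl hx)

theorem cone_mem_inside {U : Set E} {a : E} (ha : a ∈ U) (hU : StarConvex ℝ a U)
    {c : ListChain F E} (h : c ∈ inside F U) : cone a c ∈ inside F U := by
  refine cone_mem_supported (fun l (hl : convexHull ℝ {x | x ∈ l} ⊆ U) => ?_) h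
  have hins : {x | x ∈ a :: l} = insert a {x | x ∈ l} := by ext; simp
  rw [Set.mem_ofPred, hins]
  rcases Set.eq_empty_or_nonempty {x | x ∈ l} with h0 | h0
  · simpa [h0] using ha
  · rw [convexHull_insert h0]
    intro x hx
    simp only [convexJoin_singleton_left, Set.mem_iUnion] at hx
    obtain ⟨y, hy, hxy⟩ := hx
    exact hU.segment_subset (hl hy) hxy

theorem exists_bd_eq_of_starConvex {U : Set E} {a : E} (ha : a ∈ U) (hU : StarConvex ℝ a U)
    {c : ListChain F E} (h : c ∈ inside F U) (hc : bd c = 0) :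
    ∃ g ∈ inside F U, bd g = c :=
  ⟨cone a c, cone_mem_inside ha hU h, by simp [bd_cone, hc]⟩

theorem convexHull_subset_of_prism {U' : Set E'} (f g : E →ᵃ[ℝ] E') {l : List E} {l' : List E'}
    (hl' : ∀ z ∈ l', ∃ v ∈ l, z = f v ∨ z = g v)
    (h : ∀ x ∈ convexHull ℝ {v | v ∈ l}, ∀ y ∈ convexHull ℝ {v | v ∈ l},
      segment ℝ (f x) (g y) ⊆ U') :
    convexHull ℝ {x | x ∈ l'} ⊆ U' := by
  rcases Set.eq_empty_or_nonempty {x | x ∈ l'} with h0 | ⟨z₀, hz₀⟩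
  · simp [h0]
  obtain ⟨v₀, hv₀, -⟩ := hl' z₀ hz₀
  set H := convexHull ℝ {v | v ∈ l}
  have hne : H.Nonempty := ⟨v₀, subset_convexHull _ _ hv₀⟩
  have hsub : {z | z ∈ l'} ⊆ convexJoin ℝ (f '' H) (g '' H) := by
    intro z hz
    obtain ⟨v, hv, rfl | rfl⟩ := hl' z hz
    · exact subset_convexJoin_left (hne.image _) ⟨v, subset_convexHull _ _ hv, rfl⟩
    · exact subset_convexJoin_right (hne.image _) ⟨v, subset_convexHull _ _ hv, rfl⟩
  have hconv : Convex ℝ H := convex_convexHull ℝ _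
  refine (convexHull_min hsub ((hconv.affine_image f).convexJoin (hconv.affine_image g))).trans ?_
  intro z hz
  obtain ⟨_, ⟨x, hx, rfl⟩, _, ⟨y, hy, rfl⟩, hz⟩ := mem_convexJoin.1 hz
  exact h x hx y hy hz

theorem prism_mem_inside {U : Set E} {U' : Set E'} (f g : E →ᵃ[ℝ] E')
    (h : ∀ x y, segment ℝ x y ⊆ U → segment ℝ (f x) (g y) ⊆ U')
    {c : ListChain F E} (hc : c ∈ inside F U) : prism f g c ∈ inside F U' := by
  refine map_mem_of_supported _ (fun l hl => ?_) hc
  rw [prism_single]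
  refine Finsupp.supported_mono (fun l' hl' => ?_) (prismList_mem_supported f g l)
  exact convexHull_subset_of_prism f g hl'.2 fun x hx y hy =>
    h x y (((convex_convexHull ℝ _).segment_subset hx hy).trans hl)

end Inside

section Subdivision

variable {F : Type*} [CommRing F] {E E' : Type*} [AddCommGroup E] [Module ℝ E]
  [AddCommGroup E'] [Module ℝ E']

/-- The barycentre of a list of points (the origin for the empty list). -/
noncomputable def bary (l : List E) : E := (l.length : ℝ)⁻¹ • l.sum

theorem bary_eq_sum (l : List E) :
    bary l = ∑ i : Fin l.length, (l.length : ℝ)⁻¹ • l[i] := by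
  rw [bary, ← Finset.smul_sum]
  congr 1
  conv_lhs => rw [← List.ofFn_getElem (xs := l)]
  rw [List.sum_ofFn]
  rfl

theorem bary_mem_convexHull {l : List E} (hl : l ≠ []) : bary l ∈ convexHull ℝ {x | x ∈ l} := by
  have hn : (l.length : ℝ) ≠ 0 := by simpa using hl
  rw [bary_eq_sum]
  refine (convex_convexHull ℝ _).sum_mem (fun _ _ => by positivity) ?_ ?_
  · simp [hn]
  · intro i _
    exact subset_convexHull _ _ (by simp)

theorem sum_map_affineMap (f : E →ᵃ[ℝ] E') (l : List E) :
    (l.map f).sum = f.linear l.sum + (l.length : ℝ) • f 0 := by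
  induction l with
  | nil => simp
  | cons v l ih =>
    have hv : f v = f.linear v + f 0 := congrFun f.decomp v
    simp only [List.map_cons, List.sum_cons, ih, hv, map_add, List.length_cons]
    push_cast
    module

theorem bary_map (f : E →ᵃ[ℝ] E') {l : List E} (hl : l ≠ []) :
    bary (l.map f) = f (bary l) := by
  have hn : (l.length : ℝ) ≠ 0 := by simpa using hl
  have hf : f (bary l) = f.linear (bary l) + f 0 := congrFun f.decomp (bary l)
  rw [hf]
  simp [bary, sum_map_affineMap, smul_smul, hn]

/-- The values of `baryCone` on lists of length at most `n`, by recursion on `n`. -/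
noncomputable def baryConeAux (base t s : F) : ℕ → List E → ListChain F E
  | 0, _ => Finsupp.single [] base
  | n + 1, l => cone (bary l) (Finsupp.single l t +
      s • Finsupp.linearCombination F (baryConeAux base t s n) (bdList F l))

/-- The operator `Q` with `Q [] = base • []` and `Q l = cone (bary l) (t • l + s • Q (∂ l))`. It is
barycentric subdivision for `(base, t, s) = (1, 0, 1)`, and a chain homotopy from it to the identity
for `(base, t, s) = (0, 1, -1)`. -/
noncomputable def baryCone (base t s : F) : ListChain F E →ₗ[F] ListChain F E :=
  Finsupp.linearCombination F fun l => baryConeAux base t s l.length l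

theorem baryCone_nil (base t s : F) :
    baryCone base t s (Finsupp.single ([] : List E) 1) = Finsupp.single [] base := by
  simp [baryCone, baryConeAux]

theorem baryCone_single (base t s : F) {l : List E} (hl : l ≠ []) :
    baryCone base t s (Finsupp.single l 1) =
      cone (bary l) (Finsupp.single l t + s • baryCone base t s (bdList F l)) := by
  obtain ⟨v, m, rfl⟩ := List.exists_cons_of_ne_nil hl
  have : Finsupp.linearCombination F (baryConeAux base t s m.length) (bdList F (v :: m)) =
      baryCone base t s (bdList F (v :: m)) := by
    refine map_eq_of_supported _ _ (fun l' hl' => ?_) (bdList_mem_supported (v :: m))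
    have hlen : l'.length = m.length := by simpa using hl'.1
    simp [baryCone, hlen]
  conv_lhs => simp only [baryCone, Finsupp.linearCombination_single, List.length_cons,
    baryConeAux, one_smul, this]
  rfl

theorem baryCone_mem_inside_convexHull (base t s : F) (l : List E) :
    baryCone base t s (Finsupp.single l 1) ∈ inside F (convexHull ℝ {x | x ∈ l}) := by
  induction l using length_induction with
  | h l ih =>
    rcases eq_or_ne l [] with rfl | hl
    · rw [baryCone_nil]
      exact nil_mem_inside _ _
    rw [baryCone_single _ _ _ hl]
    refine cone_mem_inside (bary_mem_convexHull hl)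
      ((convex_convexHull ℝ _).starConvex (bary_mem_convexHull hl)) ?_
    refine add_mem (single_mem_inside subset_rfl t) (Submodule.smul_mem _ s ?_)
    refine map_mem_of_supported _ (fun l' hl' => ?_) (bdList_mem_supported l)
    exact inside_mono (convexHull_mono hl'.2) (ih l' (Nat.lt_of_succ_le hl'.1.le))

theorem baryCone_mem_inside (base t s : F) {U : Set E} {c : ListChain F E}
    (hc : c ∈ inside F U) : baryCone base t s c ∈ inside F U :=
  map_mem_of_supported _ (fun l hl => inside_mono hl (baryCone_mem_inside_convexHull base t s l)) hc

/-- Barycentric subdivision. -/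
noncomputable def sd : ListChain F E →ₗ[F] ListChain F E := baryCone 1 0 1

theorem sd_nil : sd (Finsupp.single ([] : List E) (1 : F)) = Finsupp.single [] 1 :=
  baryCone_nil 1 0 1

theorem sd_single {l : List E} (hl : l ≠ []) :
    sd (Finsupp.single l (1 : F)) = cone (bary l) (sd (bdList F l)) := by
  simp [sd, baryCone_single _ _ _ hl]

theorem bd_sd (c : ListChain F E) : bd (sd c) = sd (bd c) := by
  have : bd ∘ₗ sd = sd ∘ₗ (bd : ListChain F E →ₗ[F] _) := by
    refine hom_ext_of_bdList fun l ih => ?_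
    rcases eq_or_ne l [] with rfl | hl
    · simp [sd_nil, bdList]
    · rw [LinearMap.comp_apply, LinearMap.comp_apply, bd_bdList, map_zero] at ih
      simp [sd_single hl, bd_cone, ih]
  exact LinearMap.congr_fun this c

theorem bd_baryCone_zero_one_neg_one (c : ListChain F E) :
    bd (baryCone 0 1 (-1) c) = c - sd c - baryCone 0 1 (-1) (bd c) := by
  have : bd ∘ₗ baryCone 0 1 (-1) =
      LinearMap.id - sd - baryCone 0 1 (-1) ∘ₗ (bd : ListChain F E →ₗ[F] _) := by
    refine hom_ext_of_bdList fun l ih => ?_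
    rcases eq_or_ne l [] with rfl | hl
    · simp [sd_nil, baryCone_nil, bdList]
    · simp only [LinearMap.comp_apply, LinearMap.sub_apply, LinearMap.id_apply, bd_bdList,
        map_zero, sub_zero, bd_single] at ih ⊢
      simp only [sd_single hl, baryCone_single _ _ _ hl, bd_cone, map_add, ih, bd_single, map_sub,
        neg_smul, one_smul, map_neg]
      abel
  exact LinearMap.congr_fun this c

theorem exists_bd_eq_sub_sd {U : Set E} {c : ListChain F E} (hc : c ∈ inside F U) (h : bd c = 0) :
    ∃ g ∈ inside F U, bd g = c - sd c :=
  ⟨baryCone 0 1 (-1) c, baryCone_mem_inside _ _ _ hc, by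
    rw [bd_baryCone_zero_one_neg_one, h, map_zero, sub_zero]⟩

theorem push_sd (f : E →ᵃ[ℝ] E') (c : ListChain F E) : push f (sd c) = sd (push f c) := by
  have : push f ∘ₗ sd = sd ∘ₗ (push f : ListChain F E →ₗ[F] _) := by
    refine hom_ext_of_bdList fun l ih => ?_
    rcases eq_or_ne l [] with rfl | hl
    · simp [sd_nil]
    · simp only [LinearMap.comp_apply, push_single, push_bdList] at ih ⊢
      rw [sd_single hl, sd_single (by simpa using hl), push_cone, bary_map f hl, ih]
  exact LinearMap.congr_fun this c

theorem sd_single_mem_supported_length (l : List E) :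
    sd (Finsupp.single l (1 : F)) ∈ Finsupp.supported F F {l' : List E | l'.length = l.length} := by
  induction l using length_induction with
  | h l ih =>
    rcases eq_or_ne l [] with rfl | hl
    · rw [sd_nil]
      exact Finsupp.single_mem_supported _ _ rfl
    rw [sd_single hl]
    refine cone_mem_supported (S := {l' | l'.length + 1 = l.length}) (fun l' hl' => hl')
      (map_mem_of_supported _ (fun l' hl' => ?_) (bdList_mem_supported l))
    refine Finsupp.supported_mono (fun l'' hl'' => ?_) (ih l' (Nat.lt_of_succ_le hl'.1.le))
    exact (congrArg (· + 1) hl'').trans hl'.1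

theorem sd_mem_supported_length {n : ℕ} {c : ListChain F E}
    (hc : c ∈ Finsupp.supported F F {l | l.length = n}) :
    sd c ∈ Finsupp.supported F F {l | l.length = n} :=
  map_mem_of_supported _ (fun l (hl : l.length = n) => hl ▸ sd_single_mem_supported_length l) hc

theorem sd_pow_succ (n : ℕ) (c : ListChain F E) : (sd ^ (n + 1)) c = sd ((sd ^ n) c) := by
  rw [pow_succ', Module.End.mul_apply]

theorem bd_sd_pow (n : ℕ) (c : ListChain F E) : bd ((sd ^ n) c) = (sd ^ n) (bd c) := by
  induction n with
  | zero => rfl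
  | succ n ih => rw [sd_pow_succ, sd_pow_succ, bd_sd, ih]

theorem push_sd_pow (f : E →ᵃ[ℝ] E') (n : ℕ) (c : ListChain F E) :
    push f ((sd ^ n) c) = (sd ^ n) (push f c) := by
  induction n with
  | zero => rfl
  | succ n ih => rw [sd_pow_succ, sd_pow_succ, push_sd, ih]

theorem sd_pow_mem_inside (n : ℕ) {U : Set E} {c : ListChain F E} (hc : c ∈ inside F U) :
    (sd ^ n) c ∈ inside F U := by
  induction n with
  | zero => exact hc
  | succ n ih => exact sd_pow_succ n c ▸ baryCone_mem_inside _ _ _ ih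

theorem sd_pow_mem_supported_length (n : ℕ) {k : ℕ} {c : ListChain F E}
    (hc : c ∈ Finsupp.supported F F {l | l.length = k}) :
    (sd ^ n) c ∈ Finsupp.supported F F {l | l.length = k} := by
  induction n with
  | zero => exact hc
  | succ n ih => exact sd_pow_succ n c ▸ sd_mem_supported_length ih

theorem exists_bd_eq_sub_sd_pow (n : ℕ) {U : Set E} {c : ListChain F E} (hc : c ∈ inside F U)
    (h : bd c = 0) : ∃ g ∈ inside F U, bd g = c - (sd ^ n) c := by
  induction n with
  | zero => exact ⟨0, zero_mem _, by simp⟩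
  | succ n ih =>
    obtain ⟨g, hg, e⟩ := ih
    obtain ⟨g', hg', e'⟩ := exists_bd_eq_sub_sd (sd_pow_mem_inside n hc)
      (by rw [bd_sd_pow, h, map_zero])
    refine ⟨g + g', add_mem hg hg', ?_⟩
    rw [map_add, e, e', sd_pow_succ]
    abel

end Subdivision

section Mesh

open Filter Topology

variable {F : Type*} [CommRing F] {E : Type*} [NormedAddCommGroup E] [NormedSpace ℝ E]

theorem dist_bary_le {l : List E} {v : E} (hv : v ∈ l) {δ : ℝ}
    (h : ∀ x ∈ l, ∀ y ∈ l, dist x y ≤ δ) : dist v (bary l) ≤ (1 - (l.length : ℝ)⁻¹) * δ := by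
  have hpos : 0 < l.length := List.length_pos_of_mem hv
  have hn : (l.length : ℝ) ≠ 0 := by positivity
  obtain ⟨i₀, hi₀, rfl⟩ := List.getElem_of_mem hv
  have hsum : bary l - l[i₀] = ∑ i : Fin l.length, (l.length : ℝ)⁻¹ • (l[i] - l[i₀]) := by
    simp only [smul_sub, Finset.sum_sub_distrib, ← bary_eq_sum]
    simp [← Nat.cast_smul_eq_nsmul ℝ, smul_smul, hn]
  have hterm : ∀ i ∈ Finset.univ.erase (⟨i₀, hi₀⟩ : Fin l.length),
      ‖(l.length : ℝ)⁻¹ • (l[i] - l[i₀])‖ ≤ (l.length : ℝ)⁻¹ * δ := by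
    intro i _
    rw [norm_smul, Real.norm_of_nonneg (by positivity), ← dist_eq_norm]
    gcongr
    exact h _ (by simp) _ (by simp)
  calc dist l[i₀] (bary l)
      ≤ ∑ i : Fin l.length, ‖(l.length : ℝ)⁻¹ • (l[i] - l[i₀])‖ := by
        rw [dist_comm, dist_eq_norm, hsum]
        exact norm_sum_le _ _
    _ = ∑ i ∈ Finset.univ.erase (⟨i₀, hi₀⟩ : Fin l.length),
          ‖(l.length : ℝ)⁻¹ • (l[i] - l[i₀])‖ := by
        rw [← Finset.add_sum_erase _ _ (Finset.mem_univ (⟨i₀, hi₀⟩ : Fin l.length))]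
        simp
    _ ≤ (l.length - 1 : ℕ) • ((l.length : ℝ)⁻¹ * δ) := by
        simpa using Finset.sum_le_card_nsmul _ _ _ hterm
    _ = (1 - (l.length : ℝ)⁻¹) * δ := by
        rw [nsmul_eq_mul, Nat.cast_sub hpos, Nat.cast_one, ← mul_assoc, sub_mul, one_mul,
          mul_inv_cancel₀ hn]

theorem convexHull_subset_closedBall_bary {l : List E} {δ : ℝ}
    (h : ∀ x ∈ l, ∀ y ∈ l, dist x y ≤ δ) :
    convexHull ℝ {x | x ∈ l} ⊆ Metric.closedBall (bary l) ((1 - (l.length : ℝ)⁻¹) * δ) :=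
  convexHull_min (fun _ hv => dist_bary_le hv h) (convex_closedBall _ _)

theorem sd_single_mem_supported_dist {M : ℕ} {δ : ℝ} {l : List E} (hM : l.length ≤ M)
    (h : ∀ x ∈ l, ∀ y ∈ l, dist x y ≤ δ) :
    sd (Finsupp.single l (1 : F)) ∈ Finsupp.supported F F
      {l' : List E | ∀ x ∈ l', ∀ y ∈ l', dist x y ≤ (1 - (M : ℝ)⁻¹) * δ} := by
  induction l using length_induction with
  | h l ih =>
    rcases eq_or_ne l [] with rfl | hl
    · rw [sd_nil]
      exact Finsupp.single_mem_supported _ _ (by simp)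
    have hpos : 0 < l.length := List.length_pos_of_ne_nil hl
    obtain ⟨v, hv⟩ := List.exists_mem_of_ne_nil l hl
    have hδ : 0 ≤ δ := dist_nonneg.trans (h v hv v hv)
    have hball : convexHull ℝ {x | x ∈ l} ⊆
        Metric.closedBall (bary l) ((1 - (M : ℝ)⁻¹) * δ) :=
      (convexHull_subset_closedBall_bary h).trans (Metric.closedBall_subset_closedBall (by gcongr))
    have hfaces : sd (bdList F l) ∈ inside F (convexHull ℝ {x | x ∈ l}) ⊓ Finsupp.supported F F
        {l' | ∀ x ∈ l', ∀ y ∈ l', dist x y ≤ (1 - (M : ℝ)⁻¹) * δ} := by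
      refine ⟨baryCone_mem_inside _ _ _ ?_, map_mem_of_supported _ ?_ (bdList_mem_supported l)⟩
      · exact bd_single (F := F) l ▸ bd_mem_inside (single_mem_inside subset_rfl 1)
      · exact fun l' hl' => ih l' (Nat.lt_of_succ_le hl'.1.le) (by have := hl'.1; lia)
          fun x hx y hy => h x (hl'.2 hx) y (hl'.2 hy)
    rw [inside, ← Finsupp.supported_inter] at hfaces
    rw [sd_single hl]
    refine cone_mem_supported ?_ hfaces
    rintro l' ⟨hhull, hdist⟩ x hx y hy
    have hcone : ∀ z ∈ l', dist z (bary l) ≤ (1 - (M : ℝ)⁻¹) * δ :=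
      fun z hz => hball (hhull (subset_convexHull _ _ hz))
    rcases List.mem_cons.1 hx with rfl | hx <;> rcases List.mem_cons.1 hy with rfl | hy
    · exact Metric.mem_closedBall.1 (hball (bary_mem_convexHull hl))
    · exact dist_comm y _ ▸ hcone y hy
    · exact hcone x hx
    · exact hdist x hx y hy

theorem sd_pow_single_mem_supported_dist {δ : ℝ} {l : List E}
    (h : ∀ x ∈ l, ∀ y ∈ l, dist x y ≤ δ) (n : ℕ) :
    (sd ^ n) (Finsupp.single l (1 : F)) ∈ Finsupp.supported F F
      {l' : List E | ∀ x ∈ l', ∀ y ∈ l', dist x y ≤ (1 - (l.length : ℝ)⁻¹) ^ n * δ} := by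
  induction n with
  | zero => exact Finsupp.single_mem_supported _ _ (by simpa using h)
  | succ n ih =>
    have hlen : (sd ^ n) (Finsupp.single l (1 : F)) ∈
        Finsupp.supported F F {l' | l'.length = l.length} :=
      sd_pow_mem_supported_length n (Finsupp.single_mem_supported _ _ rfl)
    have hsupp := Submodule.mem_inf.2 ⟨hlen, ih⟩
    rw [← Finsupp.supported_inter] at hsupp
    rw [sd_pow_succ, pow_succ', mul_assoc]
    exact map_mem_of_supported _ (fun l' hl' => sd_single_mem_supported_dist hl'.1.le hl'.2) hsupp

theorem inside_convexHull_inf_supported_dist_le {ι : Type*} [Nonempty ι] {O : ι → Set E}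
    {K : Set E} {δ ε : ℝ} (hδ : ε < δ) (hO : ∀ x ∈ K, ∃ i, Metric.ball x δ ⊆ O i) :
    inside F K ⊓ Finsupp.supported F F {l | ∀ x ∈ l, ∀ y ∈ l, dist x y ≤ ε} ≤
      ⨆ i, inside F (K ∩ O i) := by
  rw [inside, ← Finsupp.supported_inter]
  simp only [inside, ← Finsupp.supported_iUnion]
  refine Finsupp.supported_mono fun l ⟨hK, hdist⟩ => ?_
  suffices ∃ i, convexHull ℝ {x | x ∈ l} ⊆ O i by
    obtain ⟨i, hi⟩ := this
    exact Set.mem_iUnion.2 ⟨i, Set.subset_inter hK hi⟩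
  rcases l with - | ⟨v, l⟩
  · exact ⟨Classical.arbitrary ι, by simp⟩
  obtain ⟨i, hi⟩ := hO v (hK (subset_convexHull _ _ (by simp)))
  exact ⟨i, (convexHull_min (fun x hx => (hdist x hx v (by simp)).trans_lt hδ)
    (convex_ball v δ)).trans hi⟩

theorem eventually_sd_pow_single_mem_iSup_inside {ι : Type*} [Nonempty ι] {O : ι → Set E}
    (hO : ∀ i, IsOpen (O i)) {l : List E} (hl : convexHull ℝ {x | x ∈ l} ⊆ ⋃ i, O i) :
    ∀ᶠ n in atTop, (sd ^ n) (Finsupp.single l (1 : F)) ∈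
      ⨆ i, inside F (convexHull ℝ {x | x ∈ l} ∩ O i) := by
  rcases eq_or_ne l [] with rfl | hne
  · refine .of_forall fun n => Submodule.mem_iSup_of_mem (Classical.arbitrary ι) ?_
    exact sd_pow_mem_inside n (nil_mem_inside _ 1)
  obtain ⟨δ, hδ, hleb⟩ :=
    lebesgue_number_lemma_of_metric ((List.finite_toSet l).isCompact_convexHull ℝ) hO hl
  have hpos : 0 < l.length := List.length_pos_of_ne_nil hne
  have hratio : 0 ≤ 1 - (l.length : ℝ)⁻¹ :=
    sub_nonneg.2 (inv_le_one_of_one_le₀ (by exact_mod_cast hpos))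
  have hlim := (tendsto_pow_atTop_nhds_zero_of_lt_one hratio
    (sub_lt_self 1 (by positivity))).mul_const (Metric.diam {x | x ∈ l})
  rw [zero_mul] at hlim
  filter_upwards [hlim.eventually_lt_const hδ] with n hn
  exact inside_convexHull_inf_supported_dist_le hn hleb
    ⟨sd_pow_mem_inside n (single_mem_inside subset_rfl 1), sd_pow_single_mem_supported_dist
      (fun x hx y hy => Metric.dist_le_diam_of_mem (List.finite_toSet l).isBounded hx hy) n⟩

theorem eventually_sd_pow_mem_iSup_inside {U : Set E} {ι : Type*} [Nonempty ι] {O : ι → Set E}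
    (hO : ∀ i, IsOpen (O i)) (hU : U ⊆ ⋃ i, O i) {c : ListChain F E} (hc : c ∈ inside F U) :
    ∀ᶠ n in atTop, (sd ^ n) c ∈ ⨆ i, inside F (U ∩ O i) := by
  rw [inside, Finsupp.supported_eq_span_single] at hc
  induction hc using Submodule.span_induction with
  | zero => exact .of_forall fun n => by rw [map_zero]; exact zero_mem _
  | add x y _ _ hx hy =>
    filter_upwards [hx, hy] with n hxn hyn
    rw [map_add]
    exact add_mem hxn hyn
  | smul a x _ hx =>
    filter_upwards [hx] with n hn
    rw [map_smul]
    exact Submodule.smul_mem _ a hn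
  | mem x hx =>
    obtain ⟨l, hl, rfl⟩ := hx
    filter_upwards [eventually_sd_pow_single_mem_iSup_inside (F := F) hO (hl.trans hU)] with n hn
    exact iSup_mono (fun i => inside_mono (Set.inter_subset_inter_left _ hl)) hn

end Mesh

/-! ### Cubes -/

section Generates

variable {F : Type*} [CommRing F]

/-- The cycle `b` generates the reduced homology of `U`, in all degrees at once: every cycle of
affine simplices of `U` is homologous to a multiple of `b`. -/
structure Generates {E : Type*} [AddCommGroup E] [Module ℝ E] (U : Set E)
    (b : ListChain F E) : Prop where
  mem : b ∈ inside F U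
  bd_eq_zero : bd b = 0
  exists_eq : ∀ z ∈ inside F U, bd z = 0 → ∃ a : F, ∃ g ∈ inside F U, z = a • b + bd g

theorem Generates.exists_eq_of_retraction {E : Type*} [AddCommGroup E] [Module ℝ E]
    {U U' U'' : Set E} {b : ListChain F E} (hb : Generates U b) {f : E →ᵃ[ℝ] E}
    (hf : Set.MapsTo f U' U) (hU : U ⊆ U'')
    (hseg : ∀ x y, segment ℝ x y ⊆ U' → segment ℝ (f x) y ⊆ U'')
    {z : ListChain F E} (hz : z ∈ inside F U') (hz0 : bd z = 0) :
    ∃ a : F, ∃ g ∈ inside F U'', z = a • b + bd g := by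
  obtain ⟨a, g, hg, hag⟩ := hb.exists_eq (push f z) (push_mem_inside f hf hz)
    (by rw [bd_push, hz0, map_zero])
  refine ⟨a, g + prism f id z, add_mem (inside_mono hU hg)
    (prism_mem_inside f (AffineMap.id ℝ E) hseg hz), ?_⟩
  rw [map_add, bd_prism, hz0, map_zero, push_id, hag]
  abel

theorem exists_eq_homPart_add_bd {E : Type*} [AddCommGroup E] [Module ℝ E] {U : Set E} {n : ℕ}
    {b z : ListChain F E} (hz : z ∈ Finsupp.supported F F {l | l.length = n})
    (h : ∃ a : F, ∃ g ∈ inside F U, z = a • b + bd g) :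
    ∃ a : F, ∃ g ∈ inside F U, g ∈ Finsupp.supported F F {l | l.length = n + 1} ∧
      z = a • homPart n b + bd g := by
  obtain ⟨a, g, hg, h⟩ := h
  refine ⟨a, homPart (n + 1) g, homPart_mem_inside _ hg, homPart_mem _ _, ?_⟩
  rw [bd_homPart_succ, ← map_smul, ← map_add, ← h, homPart_of_mem hz]

variable {E : Type*} [NormedAddCommGroup E] [NormedSpace ℝ E]

theorem exists_eq_add_bd_of_isOpen_cover {U O₁ O₂ : Set E} (hO₁ : IsOpen O₁) (hO₂ : IsOpen O₂)
    (hU : U ⊆ O₁ ∪ O₂) {z : ListChain F E} (hz : z ∈ inside F U) (hz0 : bd z = 0) :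
    ∃ z₁ ∈ inside F (U ∩ O₁), ∃ z₂ ∈ inside F (U ∩ O₂), ∃ g ∈ inside F U,
      z = z₁ + z₂ + bd g := by
  have hcover : U ⊆ ⋃ i : Bool, cond i O₁ O₂ := by rwa [← Set.union_eq_iUnion]
  obtain ⟨n, hn⟩ := (eventually_sd_pow_mem_iSup_inside (fun i => by cases i <;> assumption)
    hcover hz).exists
  rw [iSup_bool_eq, Submodule.mem_sup] at hn
  obtain ⟨z₁, hz₁, z₂, hz₂, hsum⟩ := hn
  obtain ⟨g, hg, hbg⟩ := exists_bd_eq_sub_sd_pow n hz hz0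
  exact ⟨z₁, hz₁, z₂, hz₂, g, hg, by rw [hsum, hbg]; abel⟩

/-- The Mayer–Vietoris step: suspending a generator. -/
theorem Generates.sub_of_inter {U O₁ O₂ : Set E} (hO₁ : IsOpen O₁) (hO₂ : IsOpen O₂)
    (hU : U ⊆ O₁ ∪ O₂) {a₁ a₂ : E} (ha₁ : a₁ ∈ U ∩ O₁) (ha₂ : a₂ ∈ U ∩ O₂)
    (hs₁ : StarConvex ℝ a₁ (U ∩ O₁)) (hs₂ : StarConvex ℝ a₂ (U ∩ O₂)) {b y₁ y₂ : ListChain F E}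
    (hb : ∀ z ∈ inside F (U ∩ O₁ ∩ (U ∩ O₂)), bd z = 0 →
      ∃ a : F, ∃ g ∈ inside F (U ∩ O₁ ∩ (U ∩ O₂)), z = a • b + bd g)
    (hy₁ : y₁ ∈ inside F (U ∩ O₁)) (hy₂ : y₂ ∈ inside F (U ∩ O₂)) (hb₁ : bd y₁ = b)
    (hb₂ : bd y₂ = b) : Generates U (y₁ - y₂) where
  mem := sub_mem (inside_mono Set.inter_subset_left hy₁) (inside_mono Set.inter_subset_left hy₂)
  bd_eq_zero := by rw [map_sub, hb₁, hb₂, sub_self]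
  exists_eq z hz hz0 := by
    obtain ⟨z₁, hz₁, z₂, hz₂, g₀, hg₀, rfl⟩ :=
      exists_eq_add_bd_of_isOpen_cover hO₁ hO₂ hU hz hz0
    have hbd : bd z₁ = -bd z₂ := by simpa [add_eq_zero_iff_eq_neg] using hz0
    have hmem : bd z₁ ∈ inside F (U ∩ O₁ ∩ (U ∩ O₂)) := by
      rw [inside_inter]
      exact ⟨bd_mem_inside hz₁, hbd ▸ neg_mem (bd_mem_inside hz₂)⟩
    obtain ⟨a, g, hg, hag⟩ := hb (bd z₁) hmem (bd_bd z₁)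
    rw [inside_inter] at hg
    obtain ⟨h₁, hh₁, e₁⟩ := exists_bd_eq_of_starConvex ha₁ hs₁ (c := z₁ - a • y₁ - g)
      (sub_mem (sub_mem hz₁ (Submodule.smul_mem _ a hy₁)) hg.1) (by simp [hag, hb₁])
    obtain ⟨h₂, hh₂, e₂⟩ := exists_bd_eq_of_starConvex ha₂ hs₂ (c := z₂ + a • y₂ + g)
      (add_mem (add_mem hz₂ (Submodule.smul_mem _ a hy₂)) hg.2)
      (by rw [map_add, map_add, map_smul, hb₂, add_assoc, ← hag, hbd, add_neg_cancel])
    refine ⟨a, g₀ + h₁ + h₂, add_mem (add_mem hg₀ (inside_mono Set.inter_subset_left hh₁))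
      (inside_mono Set.inter_subset_left hh₂), ?_⟩
    rw [map_add, map_add, e₁, e₂]
    module

end Generates

section Cube

variable {F : Type*} [CommRing F] {ι : Type*}

/-- The subspace of vectors supported on the coordinates in `s`. -/
def coordSpace (s : Finset ι) : Submodule ℝ (ι → ℝ) := Submodule.pi (↑s)ᶜ fun _ => ⊥

theorem mem_coordSpace {s : Finset ι} {x : ι → ℝ} : x ∈ coordSpace s ↔ ∀ i ∉ s, x i = 0 := by
  simp [coordSpace, Submodule.mem_pi]

/-- The coordinate space of `s` without the origin. -/
def punctured (s : Finset ι) : Set (ι → ℝ) := (coordSpace s : Set (ι → ℝ)) \ {0}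

variable [DecidableEq ι]

/-- The translation of `ι → ℝ` by `t` along the `j`-th coordinate. -/
noncomputable def translate (j : ι) (t : ℝ) : (ι → ℝ) →ᵃ[ℝ] (ι → ℝ) :=
  AffineMap.id ℝ (ι → ℝ) + AffineMap.const ℝ (ι → ℝ) (Pi.single j t : ι → ℝ)

@[simp] theorem translate_apply (j : ι) (t : ℝ) (x : ι → ℝ) :
    translate j t x = x + Pi.single j t := by
  simp [translate]

/-- The projection of `ι → ℝ` replacing the `j`-th coordinate by zero. -/
def killCoord (j : ι) : (ι → ℝ) →ₗ[ℝ] (ι → ℝ) :=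
  LinearMap.id - LinearMap.single ℝ (fun _ => ℝ) j ∘ₗ LinearMap.proj j

theorem killCoord_apply (j : ι) (x : ι → ℝ) : killCoord j x = x - Pi.single j (x j) := rfl

@[simp] theorem killCoord_single (j : ι) (a : ℝ) : killCoord j (Pi.single j a) = 0 := by
  simp [killCoord_apply]

theorem killCoord_eq_self {s : Finset ι} {j : ι} (hj : j ∉ s) {x : ι → ℝ}
    (hx : x ∈ coordSpace s) : killCoord j x = x := by
  simp [killCoord_apply, mem_coordSpace.1 hx j hj]

theorem killCoord_mem_coordSpace {s : Finset ι} {j : ι} {x : ι → ℝ}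
    (hx : x ∈ coordSpace (insert j s)) : killCoord j x ∈ coordSpace s := by
  rw [mem_coordSpace] at hx ⊢
  intro i hi
  rcases eq_or_ne i j with rfl | hij
  · simp [killCoord_apply]
  · simp [killCoord_apply, hij, hx i (by simp [hij, hi])]

theorem coordSpace_le_insert (s : Finset ι) (j : ι) : coordSpace s ≤ coordSpace (insert j s) :=
  fun _ hx => mem_coordSpace.2 fun i hi =>
    mem_coordSpace.1 hx i fun h => hi (Finset.mem_insert_of_mem h)

theorem single_mem_coordSpace (s : Finset ι) (j : ι) (a : ℝ) :
    (Pi.single j a : ι → ℝ) ∈ coordSpace (insert j s) :=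
  mem_coordSpace.2 fun i hi => by simp [show i ≠ j by rintro rfl; simp at hi]

/-- The complement of the closed half-line opposite to `ε • e_j`. -/
def slit (j : ι) (ε : ℝ) : Set (ι → ℝ) := {x | killCoord j x ≠ 0 ∨ 0 < ε * x j}

theorem isOpen_slit [Finite ι] (j : ι) (ε : ℝ) : IsOpen (slit j ε) :=
  (isOpen_ne_fun (killCoord j).continuous_of_finiteDimensional continuous_const).union
    (isOpen_lt continuous_const (continuous_const.mul (continuous_apply j)))

theorem single_mem_slit (j : ι) {ε : ℝ} (hε : ε ≠ 0) : Pi.single j ε ∈ slit j ε :=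
  Or.inr (by simpa using mul_self_pos.2 hε)

theorem starConvex_slit (j : ι) {ε : ℝ} (hε : ε ≠ 0) :
    StarConvex ℝ (Pi.single j ε) (slit j ε) := by
  intro x hx a b ha hb hab
  have hε2 := mul_self_pos.2 hε
  rcases hb.eq_or_lt with rfl | hb
  · right
    have : a = 1 := by linarith
    simpa [this] using hε2
  rcases hx with h | h
  · left
    simp [h, hb.ne']
  · right
    have : ε * (a * ε + b * x j) = a * (ε * ε) + b * (ε * x j) := by ring
    simp only [Pi.add_apply, Pi.smul_apply, Pi.single_eq_same, smul_eq_mul, this]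
    positivity

theorem punctured_inter_slit (s : Finset ι) (j : ι) (ε : ℝ) :
    punctured s ∩ slit j ε = (coordSpace s : Set (ι → ℝ)) ∩ slit j ε := by
  ext x
  refine and_congr_left fun hx => and_iff_left ?_
  rintro rfl
  simp [slit] at hx

theorem punctured_subset_slit_union_slit (s : Finset ι) (j : ι) :
    punctured s ⊆ slit j 1 ∪ slit j (-1) := by
  rintro x ⟨-, hx0⟩
  by_contra hx
  simp only [slit, Set.mem_union, Set.mem_ofPred_eq, not_or, not_not, not_lt] at hx
  have hj : x j = 0 := by linarith
  exact hx0 (by simpa [killCoord_apply, hj] using hx.1.1)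

theorem punctured_inter_slit_inter_slit (s : Finset ι) (j : ι) :
    punctured s ∩ slit j 1 ∩ (punctured s ∩ slit j (-1)) =
      {x | x ∈ coordSpace s ∧ killCoord j x ≠ 0} := by
  rw [punctured_inter_slit, punctured_inter_slit, ← Set.inter_inter_distrib_left]
  ext x
  refine and_congr_right fun _ => ⟨?_, fun h => ⟨Or.inl h, Or.inl h⟩⟩
  rintro ⟨h₁ | h₁, h₂ | h₂⟩
  · exact h₁
  · exact h₁
  · exact h₂
  · linarith

theorem Generates.exists_eq_inter_slit {s : Finset ι} {j : ι} (hj : j ∉ s)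
    {b : ListChain F (ι → ℝ)} (hb : Generates (punctured s) b) {z : ListChain F (ι → ℝ)}
    (hz : z ∈ inside F {x | x ∈ coordSpace (insert j s) ∧ killCoord j x ≠ 0}) (hz0 : bd z = 0) :
    ∃ a : F, ∃ g ∈ inside F {x | x ∈ coordSpace (insert j s) ∧ killCoord j x ≠ 0},
      z = a • b + bd g := by
  refine hb.exists_eq_of_retraction (f := (killCoord j).toAffineMap)
    (U' := {x | x ∈ coordSpace (insert j s) ∧ killCoord j x ≠ 0})
    (U'' := {x | x ∈ coordSpace (insert j s) ∧ killCoord j x ≠ 0})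
    (fun x hx => ⟨killCoord_mem_coordSpace hx.1, hx.2⟩)
    (fun x hx => ⟨coordSpace_le_insert s j hx.1, by rw [killCoord_eq_self hj hx.1]; exact hx.2⟩)
    ?_ hz hz0
  rintro x y hxy _ ⟨t, u, ht, hu, htu, rfl⟩
  have hx := killCoord_mem_coordSpace (hxy (left_mem_segment ℝ x y)).1
  have hy := (hxy (right_mem_segment ℝ x y)).1
  refine ⟨add_mem (Submodule.smul_mem _ _ (coordSpace_le_insert s j hx))
    (Submodule.smul_mem _ _ hy), ?_⟩
  simpa [killCoord_eq_self hj hx] using (hxy ⟨t, u, ht, hu, htu, rfl⟩).2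

/-- Differences of opposite faces of the boundary of the cube `[-1, 1]ˢ`. -/
noncomputable def oppositeFaces (F : Type*) [CommRing F] (s : Finset ι) :
    Submodule F (ListChain F (ι → ℝ)) :=
  Submodule.span F {c | ∃ j ∈ s, ∃ l : List (ι → ℝ), (∀ v ∈ l, v j = 0) ∧
    c = push (translate j 1) (Finsupp.single l 1) - push (translate j (-1)) (Finsupp.single l 1)}

theorem sub_mem_oppositeFaces {s : Finset ι} {j : ι} (hj : j ∈ s) {c : ListChain F (ι → ℝ)}
    (hc : c ∈ Finsupp.supported F F {l : List (ι → ℝ) | ∀ v ∈ l, v j = 0}) :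
    push (translate j 1) c - push (translate j (-1)) c ∈ oppositeFaces F s :=
  map_mem_of_supported (N := oppositeFaces F s)
    (push (translate j 1) - (push (translate j (-1)) : ListChain F (ι → ℝ) →ₗ[F] _))
    (fun l hl => Submodule.subset_span ⟨j, hj, l, hl, rfl⟩) hc

theorem prism_mem_oppositeFaces {s : Finset ι} {j : ι} (hj : j ∉ s) (a : ℝ)
    {c : ListChain F (ι → ℝ)} (hc : c ∈ oppositeFaces F s) :
    prism id (translate j a) c ∈ oppositeFaces F (insert j s) := by
  let P : ListChain F (ι → ℝ) →ₗ[F] ListChain F (ι → ℝ) := prism id (translate j a)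
  refine (Submodule.span_le (p := (oppositeFaces F (insert j s)).comap P)).2 ?_ hc
  rintro _ ⟨i, hi, l, hl, rfl⟩
  have hij : i ≠ j := fun h => hj (h ▸ hi)
  have hcomm : ∀ t : ℝ, P (push (translate i t) (Finsupp.single l 1)) =
      push (translate i t) (P (Finsupp.single l 1)) := fun t => by
    refine (push_prism (id : (ι → ℝ) → ι → ℝ) (translate j a) id (translate j a)
      (translate i t) (translate i t) (fun _ => rfl) (fun v => ?_) _).symm
    simp only [translate_apply, add_right_comm]
  have hmem : P (Finsupp.single l 1) ∈
      Finsupp.supported F F {l : List (ι → ℝ) | ∀ v ∈ l, v i = 0} := by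
    rw [prism_single]
    refine Finsupp.supported_mono (fun l' hl' x hx => ?_) (prismList_mem_supported _ _ l)
    obtain ⟨v, hv, h | h⟩ := hl'.2 x hx <;> simp [h, hl v hv, hij]
  rw [SetLike.mem_coe, Submodule.mem_comap, map_sub, hcomm, hcomm]
  exact sub_mem_oppositeFaces (Finset.mem_insert_of_mem hi) hmem

theorem push_sd_pow_eq_zero {s : Finset ι} {W : Type*} {φ : (ι → ℝ) → W}
    (hφ : ∀ j ∈ s, ∀ v : ι → ℝ, v j = 0 → φ (translate j 1 v) = φ (translate j (-1) v))
    {c : ListChain F (ι → ℝ)} (hc : c ∈ oppositeFaces F s) (n : ℕ) :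
    push φ ((sd ^ n) c) = 0 := by
  refine (Submodule.span_le (p := LinearMap.ker (push φ ∘ₗ
    (sd ^ n : ListChain F (ι → ℝ) →ₗ[F] _)))).2 ?_ hc
  rintro _ ⟨j, hj, l, hl, rfl⟩
  have hin : (Finsupp.single l 1 : ListChain F (ι → ℝ)) ∈ inside F {v : ι → ℝ | v j = 0} :=
    single_mem_inside (convexHull_min hl
      (LinearMap.ker (LinearMap.proj j : (ι → ℝ) →ₗ[ℝ] ℝ)).convex) 1
  rw [SetLike.mem_coe, LinearMap.mem_ker, LinearMap.comp_apply, map_sub, map_sub, ← push_sd_pow,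
    ← push_sd_pow, push_push, push_push, sub_eq_zero]
  exact push_eq_push_of_supported (S := {m | ∀ v ∈ m, v ∈ {v : ι → ℝ | v j = 0}})
    (fun m hm v hv => hφ j hj v (hm v hv)) (inside_le_supported_mem _ (sd_pow_mem_inside n hin))

/-- The `ε`-side of the boundary of the cylinder over `C` in the `j`-th direction: one of its lids
together with the walls leading to the boundary of `C`. -/
noncomputable def side (j : ι) (ε : ℝ) (C : ListChain F (ι → ℝ)) : ListChain F (ι → ℝ) :=
  push (translate j ε) C - prism id (translate j ε) (bd C)

theorem bd_side (j : ι) (ε : ℝ) (C : ListChain F (ι → ℝ)) : bd (side j ε C) = bd C := by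
  rw [side, map_sub, bd_push, bd_prism, bd_bd, map_zero, push_id]
  abel

theorem side_mem_inside {s : Finset ι} {j : ι} (hj : j ∉ s) {ε : ℝ} (hε : ε ≠ 0)
    {C : ListChain F (ι → ℝ)} (hC : C ∈ inside F (coordSpace s : Set (ι → ℝ)))
    (hb : bd C ∈ inside F (punctured s)) :
    side j ε C ∈ inside F (punctured (insert j s) ∩ slit j ε) := by
  rw [punctured_inter_slit]
  have htranslate : ∀ x ∈ coordSpace s, translate j ε x ∈ coordSpace (insert j s) := fun x hx => by
    rw [translate_apply]
    exact add_mem (coordSpace_le_insert s j hx) (single_mem_coordSpace s j ε)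
  have hlid : Set.MapsTo (translate j ε) (coordSpace s)
      ((coordSpace (insert j s) : Set (ι → ℝ)) ∩ slit j ε) := fun x hx =>
    ⟨htranslate x hx, Or.inr (by simpa [mem_coordSpace.1 hx j hj] using mul_self_pos.2 hε)⟩
  have hwall : ∀ x y, segment ℝ x y ⊆ punctured s →
      segment ℝ x (translate j ε y) ⊆ (coordSpace (insert j s) : Set (ι → ℝ)) ∩ slit j ε := by
    rintro x y hxy _ ⟨t, u, ht, hu, htu, rfl⟩
    have hx := (hxy (left_mem_segment ℝ x y)).1
    have hy := (hxy (right_mem_segment ℝ x y)).1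
    obtain ⟨hz, hz0⟩ := hxy ⟨t, u, ht, hu, htu, rfl⟩
    refine ⟨add_mem (Submodule.smul_mem _ _ (coordSpace_le_insert s j hx))
      (Submodule.smul_mem _ _ (htranslate y hy)), Or.inl ?_⟩
    have hkill : killCoord j (t • x + u • translate j ε y) = killCoord j (t • x + u • y) := by simp
    rw [hkill, killCoord_eq_self hj hz]
    exact hz0
  exact sub_mem (push_mem_inside _ hlid hC) (prism_mem_inside (AffineMap.id ℝ _) _ hwall hb)

/-- A triangulation of the cube `[-1, 1]ˢ`, characterised by the properties used of it: the relevant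
one is that its boundary generates the homology of the punctured coordinate space. -/
structure IsCube (s : Finset ι) (C : ListChain F (ι → ℝ)) : Prop where
  mem : C ∈ inside F (coordSpace s : Set (ι → ℝ))
  length : C ∈ Finsupp.supported F F {l | l.length = s.card + 1}
  generates : Generates (punctured s) (bd C)
  bd_eq_of_empty : s = ∅ → bd C = Finsupp.single [] 1
  bd_mem : s.Nonempty → bd C ∈ oppositeFaces F s

theorem isCube_empty : IsCube ∅ (Finsupp.single [0] 1 : ListChain F (ι → ℝ)) := by
  have hbd : bd (Finsupp.single [0] 1 : ListChain F (ι → ℝ)) = Finsupp.single [] 1 := by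
    simp [bdList]
  refine ⟨single_mem_inside (by simp) 1, Finsupp.single_mem_supported _ _ rfl,
    ⟨hbd ▸ nil_mem_inside _ 1, bd_bd _, fun z hz _ => ?_⟩, fun _ => hbd, by simp⟩
  have hz' : z ∈ Finsupp.supported F F {[]} := by
    refine Finsupp.supported_mono (fun l hl => ?_) hz
    refine List.eq_nil_iff_forall_not_mem.2 fun x hx => ?_
    obtain ⟨hx, hx0⟩ := hl (subset_convexHull _ _ hx)
    exact hx0 (funext fun i => mem_coordSpace.1 hx i (by simp))
  refine ⟨z [], 0, zero_mem _, ?_⟩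
  rw [hbd, map_zero, add_zero, Finsupp.smul_single_one]
  exact Finsupp.support_subset_singleton.1 (by exact_mod_cast (Finsupp.mem_supported _ _).1 hz')

theorem bd_prism_sub_prism (j : ι) (C : ListChain F (ι → ℝ)) :
    bd (prism id (translate j 1) C - prism id (translate j (-1)) C) =
      side j 1 C - side j (-1) C := by
  rw [map_sub, bd_prism, bd_prism, side, side]
  abel

theorem Generates.side_sub_side [Finite ι] {s : Finset ι} {j : ι} (hj : j ∉ s)
    {C : ListChain F (ι → ℝ)} (hC : C ∈ inside F (coordSpace s : Set (ι → ℝ)))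
    (h : Generates (punctured s) (bd C)) :
    Generates (punctured (insert j s)) (side j 1 C - side j (-1) C) := by
  cases nonempty_fintype ι
  have hone : (-1 : ℝ) ≠ 0 := by norm_num
  have hmem : ∀ ε : ℝ, ε ≠ 0 → Pi.single j ε ∈ punctured (insert j s) ∩ slit j ε := fun ε hε => by
    rw [punctured_inter_slit]
    exact ⟨single_mem_coordSpace s j ε, single_mem_slit j hε⟩
  have hstar : ∀ ε : ℝ, ε ≠ 0 →
      StarConvex ℝ (Pi.single j ε) (punctured (insert j s) ∩ slit j ε) := fun ε hε => by
    rw [punctured_inter_slit]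
    exact ((coordSpace _).convex.starConvex (single_mem_coordSpace s j ε)).inter
      (starConvex_slit j hε)
  have hinter : ∀ z ∈ inside F (punctured (insert j s) ∩ slit j 1 ∩
      (punctured (insert j s) ∩ slit j (-1))), bd z = 0 → ∃ a : F,
      ∃ g ∈ inside F (punctured (insert j s) ∩ slit j 1 ∩ (punctured (insert j s) ∩ slit j (-1))),
        z = a • bd C + bd g := by
    rw [punctured_inter_slit_inter_slit]
    exact fun z => h.exists_eq_inter_slit hj
  exact .sub_of_inter (isOpen_slit j 1) (isOpen_slit j (-1))
    (punctured_subset_slit_union_slit _ j) (hmem 1 one_ne_zero) (hmem (-1) hone)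
    (hstar 1 one_ne_zero) (hstar (-1) hone) hinter
    (side_mem_inside hj one_ne_zero hC h.mem) (side_mem_inside hj hone hC h.mem)
    (bd_side _ _ _) (bd_side _ _ _)

theorem IsCube.side_sub_side_mem {s : Finset ι} {j : ι} (hj : j ∉ s) {C : ListChain F (ι → ℝ)}
    (hC : IsCube s C) : side j 1 C - side j (-1) C ∈ oppositeFaces F (insert j s) := by
  have hwall : ∀ t : ℝ, prism id (translate j t) (bd C) ∈ oppositeFaces F (insert j s) := by
    intro t
    rcases s.eq_empty_or_nonempty with h | h
    · rw [hC.bd_eq_of_empty h, prism_single]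
      exact zero_mem _
    · exact prism_mem_oppositeFaces hj t (hC.bd_mem h)
  have hlids : push (translate j 1) C - push (translate j (-1)) C ∈
      oppositeFaces F (insert j s) :=
    sub_mem_oppositeFaces (Finset.mem_insert_self j s) (Finsupp.supported_mono
      (s := {l : List (ι → ℝ) | ∀ v ∈ l, v ∈ (coordSpace s : Set (ι → ℝ))})
      (fun l hl v hv => mem_coordSpace.1 (hl v hv) j hj) (inside_le_supported_mem _ hC.mem))
  rw [side, side, sub_sub_sub_comm]
  exact sub_mem hlids (sub_mem (hwall 1) (hwall (-1)))

theorem IsCube.prism_sub_prism [Finite ι] {s : Finset ι} {j : ι} (hj : j ∉ s)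
    {C : ListChain F (ι → ℝ)} (hC : IsCube s C) :
    IsCube (insert j s) (prism id (translate j 1) C - prism id (translate j (-1)) C) := by
  have hprism : ∀ t : ℝ, prism id (translate j t) C ∈
      inside F (coordSpace (insert j s) : Set (ι → ℝ)) := fun t => by
    refine prism_mem_inside (AffineMap.id ℝ _) _ (fun x y hxy => ?_) hC.mem
    refine (coordSpace (insert j s)).convex.segment_subset
      (coordSpace_le_insert s j (hxy (left_mem_segment ℝ x y))) ?_
    rw [translate_apply]
    exact add_mem (coordSpace_le_insert s j (hxy (right_mem_segment ℝ x y)))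
      (single_mem_coordSpace s j t)
  constructor
  · exact sub_mem (hprism 1) (hprism (-1))
  · rw [Finset.card_insert_of_notMem hj]
    exact sub_mem (prism_mem_supported_length _ _ hC.length)
      (prism_mem_supported_length _ _ hC.length)
  · rw [bd_prism_sub_prism]
    exact hC.generates.side_sub_side hj hC.mem
  · exact fun h => absurd h (Finset.insert_ne_empty _ _)
  · rw [bd_prism_sub_prism]
    exact fun _ => hC.side_sub_side_mem hj

theorem exists_isCube (F : Type*) [CommRing F] [Finite ι] (s : Finset ι) :
    ∃ C : ListChain F (ι → ℝ), IsCube s C := by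
  induction s using Finset.induction_on with
  | empty => exact ⟨_, isCube_empty⟩
  | insert j s hj ih =>
    obtain ⟨C, hC⟩ := ih
    exact ⟨_, hC.prism_sub_prism hj⟩

end Cube

end ListChain

/-! ### Periodic towers -/

section PeriodicDiff

variable {F M N : Type*} [CommRing F] [AddCommGroup M] [Module F M] [AddCommGroup N] [Module F N]

/-- The differentials `t - 1` and `1 + t + ⋯ + t ^ (p - 1)` of the periodic resolution of the cyclic
group of order `p` with generator `t`. -/
def periodicDiff (t : Module.End F M) (p j : ℕ) : Module.End F M :=
  if Even j then t - 1 else ∑ i ∈ Finset.range p, t ^ i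

theorem periodicDiff_zero (t : Module.End F M) (p : ℕ) : periodicDiff t p 0 = t - 1 := by
  simp [periodicDiff]

theorem periodicDiff_one (t : Module.End F M) (p : ℕ) :
    periodicDiff t p 1 = ∑ i ∈ Finset.range p, t ^ i := by
  simp [periodicDiff]

theorem periodicDiff_add_two (t : Module.End F M) (p j : ℕ) :
    periodicDiff t p (j + 2) = periodicDiff t p j := by
  simp [periodicDiff, Nat.even_add]

theorem periodicDiff_periodicDiff {t : Module.End F M} {p : ℕ} (ht : t ^ p = 1) (j : ℕ) (x : M) :
    periodicDiff t p (j + 1) (periodicDiff t p j x) = 0 := by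
  have h : periodicDiff t p (j + 1) * periodicDiff t p j = 0 := by
    rcases Nat.even_or_odd j with hj | hj
    · simp [periodicDiff, hj, Nat.even_add_one, geom_sum_mul, ht]
    · simp [periodicDiff, Nat.not_even_iff_odd.2 hj, hj.add_one, mul_geom_sum, ht]
  exact LinearMap.congr_fun h x

theorem pow_mem_of_stable {t : Module.End F M} {S : Submodule F M} (hS : ∀ x ∈ S, t x ∈ S) (i : ℕ)
    {x : M} (hx : x ∈ S) : (t ^ i) x ∈ S := by
  induction i with
  | zero => exact hx
  | succ i ih => exact pow_succ' t i ▸ hS _ ih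

theorem periodicDiff_mem {t : Module.End F M} {S : Submodule F M} (hS : ∀ x ∈ S, t x ∈ S) (p j : ℕ)
    {x : M} (hx : x ∈ S) : periodicDiff t p j x ∈ S := by
  unfold periodicDiff
  split_ifs
  · exact sub_mem (hS x hx) hx
  · rw [LinearMap.sum_apply]
    exact sum_mem fun i _ => pow_mem_of_stable hS i hx

theorem map_periodicDiff {t : Module.End F M} {t' : Module.End F N} {S : Submodule F M}
    (hS : ∀ x ∈ S, t x ∈ S) {φ : M →ₗ[F] N} (hφ : ∀ x ∈ S, φ (t x) = t' (φ x)) (p j : ℕ) {x : M}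
    (hx : x ∈ S) : φ (periodicDiff t p j x) = periodicDiff t' p j (φ x) := by
  have hpow : ∀ i : ℕ, φ ((t ^ i) x) = (t' ^ i) (φ x) := fun i => by
    induction i with
    | zero => rfl
    | succ i ih =>
      rw [pow_succ', pow_succ', Module.End.mul_apply, Module.End.mul_apply,
        hφ _ (pow_mem_of_stable hS i hx), ih]
  unfold periodicDiff
  split_ifs
  · simp [hφ x hx]
  · simp [LinearMap.sum_apply, hpow]

section Grading

variable {t : Module.End F M} {p : ℕ} {D G : Submodule F M} {χ : ZMod p → Module.End F M}

theorem pow_sub_mem_of_sub_mem (htD : ∀ x ∈ D, t x ∈ D) (htG : ∀ x ∈ G, t x ∈ G)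
    (hχ : ∀ a, ∀ x ∈ G, t (χ a x) - χ (a + 1) (t x) ∈ D) (a : ZMod p) (i : ℕ) {x : M}
    (hx : x ∈ G) : (t ^ i) (χ a x) - χ (a + i) ((t ^ i) x) ∈ D := by
  induction i with
  | zero => simp
  | succ i ih =>
    have h := add_mem (htD _ ih) (hχ (a + i) _ (pow_mem_of_stable htG i hx))
    simpa only [map_sub, sub_add_sub_cancel, pow_succ', Module.End.mul_apply, Nat.cast_succ,
      add_assoc] using h

theorem sub_norm_mem (htD : ∀ x ∈ D, t x ∈ D) (htG : ∀ x ∈ G, t x ∈ G)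
    (hχD : ∀ a, ∀ x ∈ D, χ a x ∈ D) (hsum : ∑ i ∈ Finset.range p, χ i = 1)
    (hχ : ∀ a, ∀ x ∈ G, t (χ a x) - χ (a + 1) (t x) ∈ D) {u : M} (hu : u ∈ G)
    (huD : t u - u ∈ D) : u - (∑ i ∈ Finset.range p, t ^ i) (χ 0 u) ∈ D := by
  have hpow : ∀ i : ℕ, (t ^ i) u - u ∈ D := fun i => by
    induction i with
    | zero => simp
    | succ i ih =>
      rw [pow_succ', Module.End.mul_apply, ← sub_add_sub_cancel _ (t u), ← map_sub]
      exact add_mem (htD _ ih) huD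
  have hterm : ∀ i : ℕ, χ i u - (t ^ i) (χ 0 u) ∈ D := fun i => by
    have h := add_mem (pow_sub_mem_of_sub_mem htD htG hχ 0 i hu) (hχD i _ (hpow i))
    rw [zero_add, map_sub, sub_add_sub_cancel] at h
    exact sub_mem_comm_iff.1 h
  have hu_eq : u = ∑ i ∈ Finset.range p, χ i u := by
    rw [← LinearMap.sum_apply, hsum, Module.End.one_apply]
  nth_rw 1 [hu_eq]
  rw [LinearMap.sum_apply, ← Finset.sum_sub_distrib]
  exact sum_mem fun i _ => hterm i

theorem exists_sub_sub_mem_of_norm_mem (ht : t ^ p = 1) (htD : ∀ x ∈ D, t x ∈ D)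
    (htG : ∀ x ∈ G, t x ∈ G) (hχD : ∀ a, ∀ x ∈ D, χ a x ∈ D) (hχG : ∀ a, ∀ x ∈ G, χ a x ∈ G)
    (hsum : ∑ i ∈ Finset.range p, χ i = 1)
    (hχ : ∀ a, ∀ x ∈ G, t (χ a x) - χ (a + 1) (t x) ∈ D) {u : M} (hu : u ∈ G)
    (huD : (∑ i ∈ Finset.range p, t ^ i) u ∈ D) : ∃ b ∈ G, u - (t - 1) b ∈ D := by
  let y : ℕ → M := fun i => (t ^ (p - i)) (χ i u)
  have hty : ∀ i ∈ Finset.range p, (t ^ i) (y i) = χ i u := fun i hi => by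
    rw [← Module.End.mul_apply, ← pow_add, Nat.add_sub_cancel' (Finset.mem_range.1 hi).le, ht,
      Module.End.one_apply]
  have hnorm : ∑ i ∈ Finset.range p, (t ^ (p - i)) u = t ((∑ i ∈ Finset.range p, t ^ i) u) := by
    rw [← Finset.sum_range_reflect, LinearMap.sum_apply, map_sum]
    refine Finset.sum_congr rfl fun i hi => ?_
    have := Finset.mem_range.1 hi
    rw [← Module.End.mul_apply, ← pow_succ', show p - (p - 1 - i) = i + 1 by omega]
  have hy : ∑ i ∈ Finset.range p, y i ∈ D := by
    have hterm : ∀ i ∈ Finset.range p, y i - χ 0 ((t ^ (p - i)) u) ∈ D := fun i hi => by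
      have h := pow_sub_mem_of_sub_mem htD htG hχ i (p - i) hu
      rwa [← Nat.cast_add, Nat.add_sub_cancel' (Finset.mem_range.1 hi).le, ZMod.natCast_self] at h
    have h := add_mem (sum_mem hterm) (hχD 0 _ (htD _ huD))
    rwa [Finset.sum_sub_distrib, ← map_sum, hnorm, sub_add_cancel] at h
  refine ⟨∑ i ∈ Finset.range p, (∑ k ∈ Finset.range i, t ^ k) (y i), sum_mem fun i _ => ?_, ?_⟩
  · rw [LinearMap.sum_apply]
    exact sum_mem fun k _ =>
      pow_mem_of_stable htG k (pow_mem_of_stable htG (p - i) (hχG i u hu))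
  · have hu_eq : u = ∑ i ∈ Finset.range p, (t ^ i) (y i) := by
      rw [Finset.sum_congr rfl hty, ← LinearMap.sum_apply, hsum, Module.End.one_apply]
    have hterm : ∀ i : ℕ,
        (t ^ i) (y i) - (t - 1) ((∑ k ∈ Finset.range i, t ^ k) (y i)) = y i := fun i => by
      have hgeom := LinearMap.congr_fun (mul_geom_sum t i) (y i)
      rw [Module.End.mul_apply] at hgeom
      rw [hgeom, LinearMap.sub_apply, Module.End.one_apply, sub_sub_cancel]
    nth_rw 1 [hu_eq]
    rwa [map_sum, ← Finset.sum_sub_distrib, Finset.sum_congr rfl fun i _ => hterm i]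

/-- The periodic resolution stays exact modulo `D` on a module graded by `ℤ/p` in such a way that
the generator `t` raises the degree by one; `χ a` is the projection to degree `a`. -/
theorem exists_sub_periodicDiff_mem (ht : t ^ p = 1) (htD : ∀ x ∈ D, t x ∈ D)
    (htG : ∀ x ∈ G, t x ∈ G) (hχD : ∀ a, ∀ x ∈ D, χ a x ∈ D) (hχG : ∀ a, ∀ x ∈ G, χ a x ∈ G)
    (hsum : ∑ i ∈ Finset.range p, χ i = 1)
    (hχ : ∀ a, ∀ x ∈ G, t (χ a x) - χ (a + 1) (t x) ∈ D) (j : ℕ) {u : M}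
    (hu : u ∈ G) (huD : periodicDiff t p j u ∈ D) :
    ∃ b ∈ G, u - periodicDiff t p (j + 1) b ∈ D := by
  unfold periodicDiff at huD ⊢
  rcases Nat.even_or_odd j with hj | hj
  · rw [if_pos hj] at huD
    rw [if_neg (Nat.not_even_iff_odd.2 hj.add_one)]
    exact ⟨_, hχG 0 u hu, sub_norm_mem htD htG hχD hsum hχ hu huD⟩
  · rw [if_neg (Nat.not_even_iff_odd.2 hj)] at huD
    rw [if_pos hj.add_one]
    exact exists_sub_sub_mem_of_norm_mem ht htD htG hχD hχG hsum hχ hu huD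

end Grading

end PeriodicDiff

namespace ListChain

section Tower

variable {F V W : Type*} [CommRing F]

theorem push_pow_eq_one {σ : V → V} {p : ℕ} (hσ : σ^[p] = id) :
    (push σ : Module.End F (ListChain F V)) ^ p = 1 := by
  have h : ∀ i : ℕ, (push σ : Module.End F (ListChain F V)) ^ i = push σ^[i] := fun i => by
    induction i with
    | zero => exact LinearMap.ext fun c => (push_id c).symm
    | succ i ih =>
      refine LinearMap.ext fun c => ?_
      rw [pow_succ', Module.End.mul_apply, ih, push_push, Function.iterate_succ']
  rw [h, hσ]
  exact LinearMap.ext push_id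

theorem bd_periodicDiff_push (σ : V → V) (p j : ℕ) (c : ListChain F V) :
    bd (periodicDiff (push σ) p j c) = periodicDiff (push σ) p j (bd c) :=
  map_periodicDiff (S := ⊤) (fun _ _ => Submodule.mem_top) (fun c _ => bd_push σ c) p j
    Submodule.mem_top

/-- A chain map, up to dimension `n`, from the periodic resolution of the cyclic group of order `p`
generated by `σ`; `w j` is the image of the generator in dimension `j`. -/
structure IsTower (σ : V → V) (p n : ℕ) (w : ℕ → ListChain F V) : Prop where
  length : ∀ j ≤ n, w j ∈ Finsupp.supported F F {l | l.length = j + 1}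
  bd_zero : bd (w 0) = Finsupp.single [] 1
  bd_succ : ∀ j < n, bd (w (j + 1)) = periodicDiff (push σ) p j (w j)

namespace IsTower

variable {σ : V → V} {p n : ℕ} {w : ℕ → ListChain F V}

theorem update (h : IsTower σ p n w) {g : ListChain F V}
    (hg : g ∈ Finsupp.supported F F {l | l.length = n + 2})
    (hbd : bd g = periodicDiff (push σ) p n (w n)) :
    IsTower σ p (n + 1) (Function.update w (n + 1) g) := by
  have hlow : ∀ j ≤ n, Function.update w (n + 1) g j = w j := fun j hj =>
    Function.update_of_ne (by omega) _ _
  refine ⟨fun j hj => ?_, ?_, fun j hj => ?_⟩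
  · rcases hj.lt_or_eq with hj | rfl
    · rw [hlow j (by omega)]
      exact h.length j (by omega)
    · rwa [Function.update_self]
  · rw [hlow 0 (by omega)]
    exact h.bd_zero
  · rw [hlow j (by omega)]
    rcases (Nat.lt_succ_iff.1 hj).lt_or_eq with hj | rfl
    · rw [hlow (j + 1) hj]
      exact h.bd_succ j hj
    · rwa [Function.update_self]

theorem map (h : IsTower σ p n w) {τ : W → W} {φ : ListChain F V →ₗ[F] ListChain F W}
    (hbd : ∀ c, bd (φ c) = φ (bd c)) (hnil : φ (Finsupp.single [] 1) = Finsupp.single [] 1)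
    (hlen : ∀ k, ∀ c ∈ Finsupp.supported F F {l | l.length = k},
      φ c ∈ Finsupp.supported F F {l | l.length = k}) {S : Submodule F (ListChain F V)}
    (hS : ∀ c ∈ S, push σ c ∈ S) (hφ : ∀ c ∈ S, φ (push σ c) = push τ (φ c))
    (hw : ∀ j < n, w j ∈ S) : IsTower τ p n fun j => φ (w j) where
  length j hj := hlen _ _ (h.length j hj)
  bd_zero := by rw [hbd, h.bd_zero, hnil]
  bd_succ j hj := by rw [hbd, h.bd_succ j hj, map_periodicDiff hS hφ p j (hw j hj)]

theorem bd_periodicDiff_eq_zero (h : IsTower σ p n w) (hσ : σ^[p] = id) :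
    bd (periodicDiff (push σ) p n (w n)) = 0 := by
  rw [bd_periodicDiff_push]
  rcases n with _ | n
  · rw [h.bd_zero, periodicDiff_zero]
    simp
  · rw [h.bd_succ n n.lt_succ_self, periodicDiff_periodicDiff (push_pow_eq_one hσ)]

theorem periodicDiff_mem_length (h : IsTower σ p n w) :
    periodicDiff (push σ) p n (w n) ∈ Finsupp.supported F F {l | l.length = n + 1} :=
  periodicDiff_mem (fun _ hc => push_mem_supported (fun l hl => by simpa using hl) hc) p n
    (h.length n le_rfl)

/-- Descending along the tower: if its top vanishes modulo `D`, then so does, up to boundaries and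
norms, its bottom. -/
theorem exists_sub_bd_sub_norm_mem {D G : Submodule F (ListChain F V)} (h : IsTower σ p n w)
    (hD : ∀ c ∈ D, bd c ∈ D) (hG : ∀ c ∈ G, bd c ∈ G)
    (hexact : ∀ j, ∀ u ∈ G, periodicDiff (push σ) p j u ∈ D →
      ∃ b ∈ G, u - periodicDiff (push σ) p (j + 1) b ∈ D)
    (hw : ∀ j ≤ n, w j ∈ G) (htop : w n ∈ D) :
    ∃ y b, w 0 - bd y - (∑ i ∈ Finset.range p, push σ ^ i) b ∈ D := by
  suffices hdown : ∀ k ≤ n, ∃ y, ∃ b ∈ G,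
      w (n - k) - bd y - periodicDiff (push σ) p (n - k + 1) b ∈ D by
    obtain ⟨y, b, -, hyb⟩ := hdown n le_rfl
    rw [Nat.sub_self, periodicDiff_one] at hyb
    exact ⟨y, b, hyb⟩
  intro k hk
  induction k with
  | zero => exact ⟨0, 0, zero_mem _, by simpa using htop⟩
  | succ k ih =>
    obtain ⟨y, b, hb, hyb⟩ := ih (by omega)
    obtain ⟨j, hj⟩ : ∃ j, n - k = j + 1 := ⟨n - k - 1, by omega⟩
    rw [show n - (k + 1) = j by omega]
    rw [hj, periodicDiff_add_two] at hyb
    have hbd := hD _ hyb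
    rw [map_sub, map_sub, bd_bd, sub_zero, h.bd_succ j (by omega), bd_periodicDiff_push,
      ← map_sub] at hbd
    obtain ⟨b', hb', hmem⟩ := hexact j _ (sub_mem (hw j (by omega)) (hG b hb)) hbd
    exact ⟨b, b', hb', hmem⟩

end IsTower

end Tower

end ListChain

/-! ### The tower of the deleted configuration space -/

section Rows

variable {p : ℕ} {K : Type*}

/-- The cyclic shift of the rows of a matrix. -/
def rowShift : (ZMod p × K → ℝ) →ₗ[ℝ] (ZMod p × K → ℝ) :=
  LinearMap.funLeft ℝ ℝ fun y => (y.1 - 1, y.2)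

/-- The operation subtracting the zeroth row of a matrix from all rows. -/
def subRow : (ZMod p × K → ℝ) →ₗ[ℝ] (ZMod p × K → ℝ) :=
  LinearMap.id - LinearMap.funLeft ℝ ℝ fun y => (0, y.2)

/-- The matrices whose rows are not all equal, one of the rows lying in the open unit cube. -/
def smallRow (p : ℕ) (K : Type*) : Set (ZMod p × K → ℝ) :=
  {x | subRow x ≠ 0 ∧ ∃ i, ∀ k, |x (i, k)| < 1}

/-- The matrices with entries in the open unit interval whose rows are not all equal. -/
def smallEntries (p : ℕ) (K : Type*) : Set (ZMod p × K → ℝ) :=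
  {x | subRow x ≠ 0 ∧ ∀ y, |x y| < 1}

theorem rowShift_apply (x : ZMod p × K → ℝ) (i : ZMod p) (k : K) :
    rowShift x (i, k) = x (i - 1, k) := rfl

theorem subRow_apply (x : ZMod p × K → ℝ) (i : ZMod p) (k : K) :
    subRow x (i, k) = x (i, k) - x (0, k) := rfl

theorem subRow_subRow (x : ZMod p × K → ℝ) : subRow (subRow x) = subRow x := by
  ext ⟨i, k⟩
  simp [subRow_apply]

theorem subRow_eq_zero_iff {x : ZMod p × K → ℝ} :
    subRow x = 0 ↔ ∀ i j k, x (i, k) = x (j, k) := by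
  refine ⟨fun h i j k => ?_, fun h => ?_⟩
  · have hi := congrFun h (i, k)
    have hj := congrFun h (j, k)
    rw [subRow_apply, Pi.zero_apply] at hi hj
    linarith
  · ext ⟨i, k⟩
    rw [subRow_apply, h i 0 k, sub_self, Pi.zero_apply]

theorem rowShift_iterate : (rowShift (p := p) (K := K))^[p] = id := by
  have h : ∀ (n : ℕ) (x : ZMod p × K → ℝ) (i : ZMod p) (k : K),
      rowShift^[n] x (i, k) = x (i - n, k) := fun n => by
    induction n with
    | zero => simp
    | succ n ih =>
      intro x i k
      rw [Function.iterate_succ_apply, ih, rowShift_apply, Nat.cast_succ, sub_sub]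
  ext x ⟨i, k⟩
  simp [h]

theorem subRow_rowShift_ne_zero {x : ZMod p × K → ℝ} (hx : subRow x ≠ 0) :
    subRow (rowShift x) ≠ 0 := fun h => hx <| subRow_eq_zero_iff.2 fun i j k => by
  simpa [rowShift_apply] using subRow_eq_zero_iff.1 h (i + 1) (j + 1) k

theorem rowShift_mem_smallRow {x : ZMod p × K → ℝ} (hx : x ∈ smallRow p K) :
    rowShift x ∈ smallRow p K := by
  obtain ⟨h, i, hi⟩ := hx
  exact ⟨subRow_rowShift_ne_zero h, i + 1, fun k => by simpa [rowShift_apply] using hi k⟩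

theorem rowShift_mem_smallEntries {x : ZMod p × K → ℝ} (hx : x ∈ smallEntries p K) :
    rowShift x ∈ smallEntries p K :=
  ⟨subRow_rowShift_ne_zero hx.1, fun _ => hx.2 _⟩

theorem smallEntries_subset_smallRow : smallEntries p K ⊆ smallRow p K :=
  fun _ h => ⟨h.1, 0, fun k => h.2 (0, k)⟩

theorem single_mem_smallRow [DecidableEq K] {y : ZMod p × K} (hy : y.1 ≠ 0) :
    Pi.single y 1 ∈ smallRow p K := by
  have hzero : ∀ k, (Pi.single y 1 : ZMod p × K → ℝ) (0, k) = 0 := fun k =>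
    Pi.single_eq_of_ne (fun h => hy (congrArg Prod.fst h).symm) _
  refine ⟨fun h => ?_, 0, fun k => by simp [hzero]⟩
  have h1 := congrFun h y
  rw [← Prod.mk.eta (p := y), subRow_apply, hzero, Prod.mk.eta, Pi.single_eq_same] at h1
  simp at h1

theorem isOpen_smallRow [NeZero p] [Finite K] : IsOpen (smallRow p K) := by
  have h : smallRow p K = {x | subRow x ≠ 0} ∩ ⋃ i, ⋂ k, {x | |x (i, k)| < 1} := by
    ext x
    simp [smallRow]
  rw [h]
  refine (isOpen_ne_fun subRow.continuous_of_finiteDimensional continuous_const).inter ?_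
  exact isOpen_iUnion fun i => isOpen_iInter_of_finite fun k =>
    isOpen_lt (continuous_apply _).abs continuous_const

theorem segment_subRow_subset {x y : ZMod p × K → ℝ} {U : Set (ZMod p × K → ℝ)}
    (h : segment ℝ x y ⊆ U) (hU : ∀ z ∈ U, subRow z ≠ 0) :
    segment ℝ (subRow x) y ⊆ {z | subRow z ≠ 0} := by
  rintro _ ⟨t, u, ht, hu, htu, rfl⟩
  simpa [subRow_subRow] using hU _ (h ⟨t, u, ht, hu, htu, rfl⟩)

theorem segment_subRow_subset_smallRow {x y : ZMod p × K → ℝ}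
    (h : segment ℝ x y ⊆ smallEntries p K) : segment ℝ (subRow x) y ⊆ smallRow p K := by
  intro z hz
  refine ⟨segment_subRow_subset h (fun z hz => hz.1) hz, 0, fun k => ?_⟩
  obtain ⟨t, u, ht, hu, htu, rfl⟩ := hz
  have hy := (h (right_mem_segment ℝ x y)).2 (0, k)
  have hu1 : u ≤ 1 := by linarith
  rw [show (t • subRow x + u • y) (0, k) = u * y (0, k) by simp [subRow_apply], abs_mul,
    abs_of_nonneg hu]
  exact mul_lt_one_of_nonneg_of_lt_one_right hu1 (abs_nonneg _) hy

end Rows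

namespace ListChain

section RowCoordinates

variable {p : ℕ} {K : Type*}

/-- The index set of the matrices with vanishing zeroth row. -/
def nonzeroRows (p : ℕ) (K : Type*) [NeZero p] [Fintype K] : Finset (ZMod p × K) :=
  (Finset.univ.erase 0) ×ˢ Finset.univ

variable [NeZero p] [Fintype K]

theorem mem_nonzeroRows {y : ZMod p × K} : y ∈ nonzeroRows p K ↔ y.1 ≠ 0 := by
  simp [nonzeroRows]

theorem card_nonzeroRows : (nonzeroRows p K).card = (p - 1) * Fintype.card K := by
  rw [nonzeroRows, Finset.card_product, Finset.card_erase_of_mem (Finset.mem_univ _),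
    Finset.card_univ, Finset.card_univ, ZMod.card]

theorem subRow_mem_coordSpace (x : ZMod p × K → ℝ) : subRow x ∈ coordSpace (nonzeroRows p K) :=
  mem_coordSpace.2 fun ⟨i, k⟩ hi => by
    obtain rfl : i = 0 := by simpa [mem_nonzeroRows] using hi
    rw [subRow_apply, sub_self]

theorem subRow_eq_self {x : ZMod p × K → ℝ} (hx : x ∈ coordSpace (nonzeroRows p K)) :
    subRow x = x := by
  ext ⟨i, k⟩
  rw [subRow_apply, mem_coordSpace.1 hx (0, k) (by simp [mem_nonzeroRows]), sub_zero]

theorem mapsTo_subRow_punctured :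
    Set.MapsTo subRow {x : ZMod p × K → ℝ | subRow x ≠ 0} (punctured (nonzeroRows p K)) :=
  fun x hx => ⟨subRow_mem_coordSpace x, hx⟩

theorem punctured_nonzeroRows_subset_smallRow : punctured (nonzeroRows p K) ⊆ smallRow p K :=
  fun x hx => ⟨by rw [subRow_eq_self hx.1]; exact hx.2, 0, fun k => by
    simp [mem_coordSpace.1 hx.1 (0, k) (by simp [mem_nonzeroRows])]⟩

end RowCoordinates

section RowTower

open Filter Topology

variable {F : Type*} [CommRing F] {p : ℕ} {K : Type*}

theorem eventually_push_smul_mem_inside_smallEntries [NeZero p] [Finite K]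
    {c : ListChain F (ZMod p × K → ℝ)} (hc : c ∈ inside F {x : ZMod p × K → ℝ | subRow x ≠ 0}) :
    ∀ᶠ ε : ℝ in 𝓝[>] 0, push (ε • ·) c ∈ inside F (smallEntries p K) := by
  have hsmall : ∀ᶠ ε : ℝ in 𝓝[>] 0, ∀ l ∈ c.support, ∀ v ∈ l, ∀ y, |ε * v y| < 1 := by
    refine (Filter.eventually_all_finset _).2 fun l _ =>
      (Filter.eventually_all_finite (List.finite_toSet l)).2 fun v _ =>
        Filter.eventually_all.2 fun y => ?_
    have hlim : Tendsto (fun ε : ℝ => |ε * v y|) (𝓝 0) (𝓝 |0 * v y|) :=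
      (continuous_id.mul continuous_const).abs.tendsto 0
    rw [zero_mul, abs_zero] at hlim
    exact (hlim.eventually_lt_const one_pos).filter_mono nhdsWithin_le_nhds
  filter_upwards [hsmall, self_mem_nhdsWithin] with ε hε hpos
  have hconv : Convex ℝ {x : ZMod p × K → ℝ | ∀ y, |ε * x y| < 1} := by
    have h : {x : ZMod p × K → ℝ | ∀ y, |ε * x y| < 1} =
        ⋂ y, (ε • LinearMap.proj y : (ZMod p × K → ℝ) →ₗ[ℝ] ℝ) ⁻¹' Metric.ball 0 1 := by
      ext x
      simp
    rw [h]
    exact convex_iInter fun y => (convex_ball 0 1).linear_preimage _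
  have hmem : c ∈ inside F ({x | subRow x ≠ 0} ∩ {x : ZMod p × K → ℝ | ∀ y, |ε * x y| < 1}) := by
    rw [inside_inter]
    exact ⟨hc, (Finsupp.mem_supported F c).2 fun l hl => convexHull_min (hε l hl) hconv⟩
  let f : (ZMod p × K → ℝ) →ₗ[ℝ] (ZMod p × K → ℝ) := ε • LinearMap.id
  have hf : Set.MapsTo f.toAffineMap ({x | subRow x ≠ 0} ∩ {x | ∀ y, |ε * x y| < 1})
      (smallEntries p K) := fun x hx => by
    refine ⟨?_, hx.2⟩
    rw [LinearMap.coe_toAffineMap, LinearMap.smul_apply, LinearMap.id_apply, map_smul]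
    exact smul_ne_zero (Set.mem_Ioi.1 hpos).ne' hx.1
  exact push_mem_inside f.toAffineMap hf hmem

theorem push_rowShift_mem_inside {U : Set (ZMod p × K → ℝ)} (hU : Set.MapsTo rowShift U U)
    {c : ListChain F (ZMod p × K → ℝ)} (hc : c ∈ inside F U) : push rowShift c ∈ inside F U :=
  push_mem_inside rowShift.toAffineMap hU hc

theorem IsCube.generates_subRow_ne_zero [NeZero p] [Fintype K] [DecidableEq K]
    {C : ListChain F (ZMod p × K → ℝ)} (hC : IsCube (nonzeroRows p K) C) :
    Generates {x : ZMod p × K → ℝ | subRow x ≠ 0} (bd C) := by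
  have hU : punctured (nonzeroRows p K) ⊆ {x | subRow x ≠ 0} := fun x hx =>
    (punctured_nonzeroRows_subset_smallRow hx).1
  exact ⟨inside_mono hU hC.generates.mem, bd_bd C, fun z hz hz0 =>
    hC.generates.exists_eq_of_retraction (f := subRow.toAffineMap) mapsTo_subRow_punctured hU
      (fun x y hxy => segment_subRow_subset hxy fun z hz => hz) hz hz0⟩

theorem exists_isTower_of_lt [NeZero p] [Fintype K] {n : ℕ} (hn : n < (p - 1) * Fintype.card K) :
    ∃ w : ℕ → ListChain F (ZMod p × K → ℝ), IsTower rowShift p n w ∧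
      ∀ j ≤ n, w j ∈ inside F {x : ZMod p × K → ℝ | subRow x ≠ 0} := by
  classical
  rw [← card_nonzeroRows] at hn
  induction n with
  | zero =>
    obtain ⟨y, hy⟩ := Finset.card_pos.1 hn
    have hx := (single_mem_smallRow (mem_nonzeroRows.1 hy)).1
    refine ⟨fun _ => Finsupp.single [Pi.single y 1] 1,
      ⟨fun j hj => ?_, by simp [bdList], by simp⟩,
      fun _ _ => single_mem_inside (by simpa using hx) 1⟩
    obtain rfl : j = 0 := by omega
    exact Finsupp.single_mem_supported _ _ rfl
  | succ n ih =>
    obtain ⟨w, hw, hin⟩ := ih (by omega)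
    obtain ⟨C, hC⟩ := exists_isCube F (nonzeroRows p K)
    have hshift : Set.MapsTo rowShift {x : ZMod p × K → ℝ | subRow x ≠ 0} {x | subRow x ≠ 0} :=
      fun x => subRow_rowShift_ne_zero
    have hz : periodicDiff (push rowShift) p n (w n) ∈
        inside F {x : ZMod p × K → ℝ | subRow x ≠ 0} :=
      periodicDiff_mem (fun c => push_rowShift_mem_inside hshift) p n (hin n le_rfl)
    obtain ⟨a, g, hg, hlen, hag⟩ := exists_eq_homPart_add_bd hw.periodicDiff_mem_length
      (hC.generates_subRow_ne_zero.exists_eq _ hz (hw.bd_periodicDiff_eq_zero rowShift_iterate))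
    rw [← bd_homPart_succ, homPart_of_mem_of_ne (by omega) hC.length, map_zero, smul_zero,
      zero_add] at hag
    refine ⟨_, hw.update hlen hag.symm, fun j hj => ?_⟩
    rcases hj.lt_or_eq with hj | rfl
    · rw [Function.update_of_ne hj.ne]
      exact hin j (by omega)
    · rwa [Function.update_self]

theorem exists_isTower_smallEntries [NeZero p] [Fintype K] {n : ℕ}
    (hn : n < (p - 1) * Fintype.card K) :
    ∃ w : ℕ → ListChain F (ZMod p × K → ℝ), IsTower rowShift p n w ∧
      ∀ j ≤ n, w j ∈ inside F (smallEntries p K) := by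
  obtain ⟨w, hw, hin⟩ := exists_isTower_of_lt (F := F) hn
  obtain ⟨ε, hε⟩ := ((Filter.eventually_all_finset (Finset.range (n + 1))).2 fun j hj =>
    eventually_push_smul_mem_inside_smallEntries
      (hin j (Nat.lt_succ_iff.1 (Finset.mem_range.1 hj)))).exists
  refine ⟨fun j => push (ε • ·) (w j), hw.map (S := ⊤) (bd_push _) (by simp)
    (fun k c hc => push_mem_supported (fun l hl => by simpa using hl) hc)
    (fun _ _ => Submodule.mem_top) (fun c _ => ?_) (fun _ _ => Submodule.mem_top),
    fun j hj => hε j (Finset.mem_range.2 (Nat.lt_succ_iff.2 hj))⟩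
  rw [push_push, push_push]
  congr 2

theorem exists_isTower_bd_sub_mem_oppositeFaces [NeZero p] [Fintype K] [DecidableEq K] {n : ℕ}
    (hn : n + 1 = (p - 1) * Fintype.card K) :
    ∃ w : ℕ → ListChain F (ZMod p × K → ℝ), IsTower rowShift p n w ∧
      (∀ j ≤ n, w j ∈ inside F (smallRow p K)) ∧
      ∃ g ∈ inside F (smallRow p K), g ∈ Finsupp.supported F F {l | l.length = n + 2} ∧
        bd g - periodicDiff (push rowShift) p n (w n) ∈ oppositeFaces F (nonzeroRows p K) := by
  obtain ⟨w, hw, hin⟩ := exists_isTower_smallEntries (F := F)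
    (show n < (p - 1) * Fintype.card K by omega)
  obtain ⟨C, hC⟩ := exists_isCube F (nonzeroRows p K)
  have hcard : (nonzeroRows p K).card = n + 1 := card_nonzeroRows.trans hn.symm
  have hz : periodicDiff (push rowShift) p n (w n) ∈ inside F (smallEntries p K) :=
    periodicDiff_mem (fun c => push_rowShift_mem_inside fun x => rowShift_mem_smallEntries) p n
      (hin n le_rfl)
  obtain ⟨a, g, hg, hlen, hag⟩ := exists_eq_homPart_add_bd hw.periodicDiff_mem_length
    (hC.generates.exists_eq_of_retraction (f := subRow.toAffineMap)
      (fun x hx => mapsTo_subRow_punctured hx.1) punctured_nonzeroRows_subset_smallRow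
      (fun x y hxy => segment_subRow_subset_smallRow hxy) hz
      (hw.bd_periodicDiff_eq_zero rowShift_iterate))
  refine ⟨w, hw, fun j hj => inside_mono smallEntries_subset_smallRow (hin j hj), g, hg, hlen, ?_⟩
  rw [← bd_homPart_succ, homPart_of_mem (hcard ▸ hC.length)] at hag
  rw [hag, sub_add_cancel_right]
  exact neg_mem (Submodule.smul_mem _ a (hC.bd_mem (Finset.card_pos.1 (by omega))))

end RowTower

end ListChain

/-! ### Joins of columns -/

theorem list_toFinset_map {α β : Type*} [DecidableEq α] [DecidableEq β] (f : α → β) (l : List α) :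
    (l.map f).toFinset = l.toFinset.image f := by
  ext x
  simp

section JoinFaces

variable {p : ℕ} {K : Type*}

/-- The cyclic shift of the row indices of the entries of a matrix. -/
def rotate (y : ZMod p × K) : ZMod p × K :=
  (y.1 + 1, y.2)

/-- The faces of the join, over the columns, of the boundaries of the simplices spanned by a
column: the sets of entries containing no complete column. -/
def IsJoinFace (A : Finset (ZMod p × K)) : Prop :=
  ∀ k, ∃ i, (i, k) ∉ A

theorem rotate_injective : Function.Injective (rotate (p := p) (K := K)) := fun y z h => by
  rw [rotate, rotate, Prod.mk.injEq, add_left_inj] at h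
  exact Prod.ext h.1 h.2

theorem rotate_iterate_eq (n : ℕ) (y : ZMod p × K) : rotate^[n] y = (y.1 + n, y.2) := by
  induction n with
  | zero => simp
  | succ n ih => rw [Function.iterate_succ_apply', ih, rotate, Nat.cast_succ, add_assoc]

theorem rotate_iterate : (rotate (p := p) (K := K))^[p] = id := by
  ext1 y
  simp [rotate_iterate_eq]

theorem IsJoinFace.mono {A B : Finset (ZMod p × K)} (hA : IsJoinFace A) (hBA : B ⊆ A) :
    IsJoinFace B := fun k =>
  let ⟨i, hi⟩ := hA k
  ⟨i, fun h => hi (hBA h)⟩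

theorem IsJoinFace.card_column_le [NeZero p] [DecidableEq K] {A : Finset (ZMod p × K)}
    (hA : IsJoinFace A) (k : K) :
    (A.filter fun y => y.2 = k).card ≤ p - 1 := by
  obtain ⟨i, hi⟩ := hA k
  have hcard : (Finset.univ.erase i).card = p - 1 := by
    rw [Finset.card_erase_of_mem (Finset.mem_univ i), Finset.card_univ, ZMod.card]
  refine hcard ▸ Finset.card_le_card_of_injOn Prod.fst (fun y hy => ?_) fun y hy z hz hyz => ?_
  · obtain ⟨hyA, rfl⟩ := Finset.mem_filter.1 hy
    exact Finset.mem_erase.2 ⟨fun h => hi (by rwa [← h]), Finset.mem_univ _⟩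
  · exact Prod.ext hyz ((Finset.mem_filter.1 hy).2.trans (Finset.mem_filter.1 hz).2.symm)

theorem IsJoinFace.card_le [NeZero p] [Fintype K] {A : Finset (ZMod p × K)} (hA : IsJoinFace A) :
    A.card ≤ (p - 1) * Fintype.card K := by
  classical
  rw [Finset.card_eq_sum_card_fiberwise (f := Prod.snd) (t := Finset.univ)
    fun _ _ => Finset.mem_coe.2 (Finset.mem_univ _), mul_comm, ← smul_eq_mul, ← Finset.card_univ]
  exact Finset.sum_le_card_nsmul _ _ _ fun k _ => hA.card_column_le k

variable [DecidableEq K]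

theorem IsJoinFace.image_rotate {A : Finset (ZMod p × K)} (hA : IsJoinFace A) :
    IsJoinFace (A.image rotate) := fun k =>
  let ⟨i, hi⟩ := hA k
  ⟨i + 1, fun h => hi (rotate_injective.mem_finset_image.1 (by exact h))⟩

theorem IsJoinFace.card_column_ne_zero [Fact p.Prime] {A : Finset (ZMod p × K)}
    (hA : IsJoinFace A) {k : K} (hk : k ∈ A.image Prod.snd) :
    ((A.filter fun y => y.2 = k).card : ZMod p) ≠ 0 := by
  have hpos : 0 < (A.filter fun y => y.2 = k).card := by
    obtain ⟨y, hy, hyk⟩ := Finset.mem_image.1 hk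
    exact Finset.card_pos.2 ⟨y, Finset.mem_filter.2 ⟨hy, hyk⟩⟩
  have hlt : (A.filter fun y => y.2 = k).card < p :=
    (hA.card_column_le k).trans_lt (Nat.sub_lt (Fact.out : p.Prime).pos one_pos)
  exact fun h => Nat.not_dvd_of_pos_of_lt hpos hlt ((ZMod.natCast_eq_zero_iff _ _).1 h)

theorem exists_equivariant_index [Fact p.Prime] :
    ∃ ψ : Finset (ZMod p × K) → ZMod p,
      ∀ A, A.Nonempty → IsJoinFace A → ψ (A.image rotate) = ψ A + 1 := by
  let B : Finset (ZMod p × K) → Finset (ZMod p × K) := fun A =>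
    A.filter fun y => some y.2 = (A.image Prod.snd).toList.head?
  -- `ψ A` is the mean of the row indices of the entries of `A` in a column depending only on the
  -- set of columns met by `A`.
  refine ⟨fun A => (∑ y ∈ B A, y.1) / (B A).card, fun A hA hface => ?_⟩
  have hB : B (A.image rotate) = (B A).image rotate := by
    have hcol : (A.image rotate).image Prod.snd = A.image Prod.snd := by
      rw [Finset.image_image]
      rfl
    simp only [B, hcol, Finset.filter_image]
    rfl
  have hcard : ((B A).card : ZMod p) ≠ 0 := by
    obtain ⟨k, hk⟩ := Option.ne_none_iff_exists'.1
      (show (A.image Prod.snd).toList.head? ≠ none by simpa using hA.ne_empty)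
    have hBk : B A = A.filter fun y => y.2 = k := by simp only [B, hk, Option.some.injEq]
    rw [hBk]
    exact hface.card_column_ne_zero (Finset.mem_toList.1 (List.mem_of_head? hk))
  beta_reduce
  rw [hB, Finset.sum_image rotate_injective.injOn,
    Finset.card_image_of_injective _ rotate_injective]
  simp only [rotate, Finset.sum_add_distrib, Finset.sum_const, nsmul_eq_mul, mul_one]
  rw [add_div, div_self hcard]

theorem exists_equivariant_selection [Fact p.Prime] [Nonempty K] :
    ∃ s : Finset (ZMod p × K) → ZMod p × K,
      ∀ A, A.Nonempty → IsJoinFace A → s A ∈ A ∧ s (A.image rotate) = rotate (s A) := by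
  obtain ⟨ψ, hψ⟩ := exists_equivariant_index (p := p) (K := K)
  let base : Finset (ZMod p × K) → Finset (ZMod p × K) := fun A =>
    A.image fun y => (y.1 - ψ A, y.2)
  have hchoice : ∀ A : Finset (ZMod p × K), ∃ y, A.Nonempty → y ∈ A := fun A => by
    by_cases hA : A.Nonempty
    · exact ⟨hA.choose, fun _ => hA.choose_spec⟩
    · exact ⟨Classical.arbitrary _, fun h => absurd h hA⟩
  choose c hc using hchoice
  refine ⟨fun A => ((c (base A)).1 + ψ A, (c (base A)).2), fun A hA hface => ⟨?_, ?_⟩⟩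
  · obtain ⟨y, hy, hyc⟩ := Finset.mem_image.1 (hc (base A) (hA.image _))
    beta_reduce
    rwa [← hyc, sub_add_cancel]
  · have hbase : base (A.image rotate) = base A := by
      simp only [base, Finset.image_image, hψ A hA hface]
      refine Finset.image_congr fun y _ => ?_
      simp [rotate]
    simp only [hbase, hψ A hA hface, rotate, add_assoc]

end JoinFaces

namespace ListChain

section AltRel

variable {F V W : Type*} [CommRing F]

/-- The relations of the alternating quotient: lists with two equal adjacent vertices vanish, and
exchanging two adjacent vertices changes the sign. -/
inductive AltRel : ListChain F V → Prop
  | adjacent (a : V) (l : List V) : AltRel (Finsupp.single (a :: a :: l) 1)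
  | swap (a b : V) (l : List V) :
      AltRel (Finsupp.single (a :: b :: l) 1 + Finsupp.single (b :: a :: l) 1)
  | cone (v : V) {c : ListChain F V} (hc : AltRel c) : AltRel (ListChain.cone v c)

/-- The submodule spanned by the relations of the alternating quotient. -/
noncomputable def altRel (F V : Type*) [CommRing F] : Submodule F (ListChain F V) :=
  Submodule.span F {c | AltRel c}

theorem map_mem_of_altRel {M : Type*} [AddCommGroup M] [Module F M] {φ : ListChain F V →ₗ[F] M}
    {N : Submodule F M} (h : ∀ c, AltRel c → φ c ∈ N) {c : ListChain F V} (hc : c ∈ altRel F V) :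
    φ c ∈ N :=
  (Submodule.span_le (p := N.comap φ)).2 h hc

theorem AltRel.mem {c : ListChain F V} (hc : AltRel c) : c ∈ altRel F V :=
  Submodule.subset_span hc

theorem cone_mem_altRel (v : V) {c : ListChain F V} (hc : c ∈ altRel F V) :
    cone v c ∈ altRel F V :=
  map_mem_of_altRel (fun _ hc => (AltRel.cone v hc).mem) hc

theorem cone_cone_self_mem_altRel (a : V) (c : ListChain F V) :
    cone a (cone a c) ∈ altRel F V :=
  map_mem_of_supported (F := F) (cone a ∘ₗ cone a) (S := Set.univ)
    (fun l _ => by simpa using (AltRel.adjacent a l).mem) (by simp)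

theorem cone_cone_add_mem_altRel (a b : V) (c : ListChain F V) :
    cone a (cone b c) + cone b (cone a c) ∈ altRel F V :=
  map_mem_of_supported (F := F) (cone a ∘ₗ cone b + cone b ∘ₗ cone a) (S := Set.univ)
    (fun l _ => by simpa using (AltRel.swap a b l).mem) (by simp)

theorem bd_mem_altRel {c : ListChain F V} (hc : c ∈ altRel F V) : bd c ∈ altRel F V := by
  refine map_mem_of_altRel (fun c hc => ?_) hc
  induction hc with
  | adjacent a l =>
    rw [bd_single, bdList, bdList, map_sub, cone_single, sub_sub_cancel]
    exact cone_cone_self_mem_altRel a _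
  | swap a b l =>
    have h : bd (Finsupp.single (a :: b :: l) (1 : F) + Finsupp.single (b :: a :: l) 1) =
        cone a (cone b (bdList F l)) + cone b (cone a (bdList F l)) := by
      simp only [map_add, bd_single, bdList, map_sub, cone_single]
      abel
    rw [h]
    exact cone_cone_add_mem_altRel a b _
  | cone v hc ih =>
    rw [bd_cone]
    exact sub_mem hc.mem (cone_mem_altRel v ih)

theorem push_mem_altRel (f : V → W) {c : ListChain F V} (hc : c ∈ altRel F V) :
    push f c ∈ altRel F W := by
  refine map_mem_of_altRel (fun c hc => ?_) hc
  induction hc with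
  | adjacent a l => simpa using (AltRel.adjacent (f a) (l.map f)).mem
  | swap a b l => simpa using (AltRel.swap (f a) (f b) (l.map f)).mem
  | cone v hc ih =>
    rw [push_cone]
    exact cone_mem_altRel (f v) ih

theorem weight_toFinset_mem_altRel [DecidableEq V] (f : Finset V → F) {c : ListChain F V}
    (hc : c ∈ altRel F V) : weight (fun l => f l.toFinset) c ∈ altRel F V := by
  refine map_mem_of_altRel (fun c hc => ?_) hc
  induction hc generalizing f with
  | adjacent a l =>
    rw [weight_single, one_mul, ← Finsupp.smul_single_one]
    exact Submodule.smul_mem _ _ (AltRel.adjacent a l).mem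
  | swap a b l =>
    have hset : (b :: a :: l).toFinset = (a :: b :: l).toFinset := by
      simp [Finset.insert_comm]
    rw [map_add, weight_single, weight_single, hset, one_mul, ← Finsupp.smul_single_one,
      ← Finsupp.smul_single_one (b :: a :: l), ← smul_add]
    exact Submodule.smul_mem _ _ (AltRel.swap a b l).mem
  | cone v _ ih =>
    rw [weight_cone]
    simpa using cone_mem_altRel v (ih fun A => f (insert v A))

theorem apply_nil_of_mem_altRel {c : ListChain F V} (hc : c ∈ altRel F V) : c [] = 0 := by
  refine (Submodule.mem_bot F).1 (map_mem_of_altRel (φ := Finsupp.lapply []) (fun c hc => ?_) hc)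
  rw [Submodule.mem_bot, Finsupp.lapply_apply]
  cases hc with
  | adjacent a l => simp
  | swap a b l => simp
  | cone v _ => exact Finsupp.mapDomain_of_notMem_range _ _ (by simp)

theorem single_mem_altRel_of_not_nodup {l : List V} (hl : ¬ l.Nodup) :
    Finsupp.single l 1 ∈ altRel F V := by
  have hcons : ∀ (v : V) (l : List V), v ∈ l → Finsupp.single (v :: l) 1 ∈ altRel F V := by
    intro v l hv
    induction l with
    | nil => simp at hv
    | cons a l ih =>
      rcases List.mem_cons.1 hv with rfl | hv
      · exact (AltRel.adjacent v l).mem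
      · have h := sub_mem (AltRel.swap (F := F) v a l).mem (cone_mem_altRel a (ih hv))
        rwa [cone_single, add_sub_cancel_right] at h
  induction l with
  | nil => simp at hl
  | cons v l ih =>
    by_cases hv : v ∈ l
    · exact hcons v l hv
    · simpa using cone_mem_altRel v (ih fun h => hl (List.nodup_cons.2 ⟨hv, h⟩))

/-- The degenerate chains: those vanishing in the unaugmented alternating chain complex. -/
noncomputable def degenerate (F V : Type*) [CommRing F] : Submodule F (ListChain F V) :=
  altRel F V ⊔ Submodule.span F {Finsupp.single [] 1}

theorem map_mem_of_degenerate {M : Type*} [AddCommGroup M] [Module F M] {φ : ListChain F V →ₗ[F] M}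
    {N : Submodule F M} (h : ∀ c ∈ altRel F V, φ c ∈ N) (hnil : φ (Finsupp.single [] 1) ∈ N)
    {c : ListChain F V} (hc : c ∈ degenerate F V) : φ c ∈ N :=
  (sup_le (c := N.comap φ) h ((Submodule.span_singleton_le_iff_mem _ _).2 hnil)) hc

theorem altRel_le_degenerate : altRel F V ≤ degenerate F V :=
  le_sup_left

theorem single_nil_mem_degenerate (a : F) : Finsupp.single [] a ∈ degenerate F V := by
  rw [← Finsupp.smul_single_one]
  exact Submodule.mem_sup_right (Submodule.smul_mem _ _ (Submodule.mem_span_singleton_self _))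

theorem bd_mem_altRel_of_mem_degenerate {c : ListChain F V} (hc : c ∈ degenerate F V) :
    bd c ∈ altRel F V :=
  map_mem_of_degenerate (fun _ => bd_mem_altRel) (by simp [bdList]) hc

theorem push_mem_degenerate (f : V → W) {c : ListChain F V} (hc : c ∈ degenerate F V) :
    push f c ∈ degenerate F W :=
  map_mem_of_degenerate (fun _ hc => altRel_le_degenerate (push_mem_altRel f hc))
    (by simpa using single_nil_mem_degenerate 1) hc

theorem weight_toFinset_mem_degenerate [DecidableEq V] (f : Finset V → F) {c : ListChain F V}
    (hc : c ∈ degenerate F V) : weight (fun l => f l.toFinset) c ∈ degenerate F V :=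
  map_mem_of_degenerate (fun _ hc => altRel_le_degenerate (weight_toFinset_mem_altRel f hc))
    (by simpa using single_nil_mem_degenerate _) hc

end AltRel

section JoinChains

variable {F : Type*} [CommRing F] {p : ℕ} {K : Type*} [DecidableEq K]

/-- The chains of the join of the boundaries of the columns. -/
def joinChains (F : Type*) [CommRing F] (p : ℕ) (K : Type*) [DecidableEq K] :
    Submodule F (ListChain F (ZMod p × K)) :=
  Finsupp.supported F F {l | IsJoinFace l.toFinset}

theorem bd_mem_joinChains {c : ListChain F (ZMod p × K)} (hc : c ∈ joinChains F p K) :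
    bd c ∈ joinChains F p K := by
  refine map_mem_of_supported bd (fun l hl => ?_) hc
  rw [bd_single]
  exact Finsupp.supported_mono (s := {l' | l'.length + 1 = l.length ∧ l' ⊆ l})
    (fun l' hl' => IsJoinFace.mono hl fun _ hy =>
      List.mem_toFinset.2 (hl'.2 (List.mem_toFinset.1 hy)))
    (bdList_mem_supported l)

theorem push_rotate_mem_joinChains {c : ListChain F (ZMod p × K)} (hc : c ∈ joinChains F p K) :
    push rotate c ∈ joinChains F p K :=
  push_mem_supported (fun l hl => by
    rw [Set.mem_ofPred, list_toFinset_map]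
    exact IsJoinFace.image_rotate hl) hc

theorem mem_degenerate_of_card_lt_length [NeZero p] [Fintype K] {n : ℕ}
    (hn : (p - 1) * Fintype.card K < n) {c : ListChain F (ZMod p × K)} (hc : c ∈ joinChains F p K)
    (hlen : c ∈ Finsupp.supported F F {l | l.length = n}) : c ∈ degenerate F (ZMod p × K) := by
  refine altRel_le_degenerate (map_mem_of_supported (F := F) LinearMap.id
    (S := {l | IsJoinFace l.toFinset} ∩ {l | l.length = n}) (fun l hl => ?_) ?_)
  · refine single_mem_altRel_of_not_nodup fun hnodup => ?_
    have hcard := IsJoinFace.card_le hl.1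
    rw [List.toFinset_card_of_nodup hnodup, hl.2] at hcard
    omega
  · rw [Finsupp.supported_inter]
    exact ⟨hc, hlen⟩

/-- The periodic resolution is exact on the chains of the join modulo the degenerate ones, because
the shift acts freely on its faces. -/
theorem exists_sub_periodicDiff_mem_degenerate [Fact p.Prime] (j : ℕ)
    {u : ListChain F (ZMod p × K)} (hu : u ∈ joinChains F p K)
    (huD : periodicDiff (push rotate) p j u ∈ degenerate F (ZMod p × K)) :
    ∃ b ∈ joinChains F p K,
      u - periodicDiff (push rotate) p (j + 1) b ∈ degenerate F (ZMod p × K) := by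
  obtain ⟨ψ, hψ⟩ := exists_equivariant_index (p := p) (K := K)
  let χ : ZMod p → Module.End F (ListChain F (ZMod p × K)) := fun a =>
    weight fun l => if ψ l.toFinset = a then 1 else 0
  have hsum : ∑ i ∈ Finset.range p, χ i = 1 := hom_ext fun l => by
    simp only [LinearMap.sum_apply, χ, weight_single, one_mul]
    rw [Finset.sum_eq_single (ψ l.toFinset).val]
    · simp
    · intro i hi hne
      rw [if_neg, Finsupp.single_zero]
      rintro h
      rw [h, ZMod.val_natCast_of_lt (Finset.mem_range.1 hi)] at hne
      exact hne rfl
    · exact fun h => absurd (Finset.mem_range.2 (ZMod.val_lt _)) h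
  refine exists_sub_periodicDiff_mem (push_pow_eq_one rotate_iterate)
    (fun _ => push_mem_degenerate rotate) (fun _ => push_rotate_mem_joinChains)
    (χ := χ) (fun a _ => weight_toFinset_mem_degenerate fun A => if ψ A = a then 1 else 0)
    (fun _ _ => weight_mem_supported _) hsum (fun a u hu => ?_) j hu huD
  refine map_mem_of_supported (push rotate ∘ₗ χ a - χ (a + 1) ∘ₗ push rotate) (fun l hl => ?_) hu
  simp only [LinearMap.sub_apply, LinearMap.comp_apply, χ, weight_single, push_single, one_mul,
    ← Finsupp.single_sub]
  rcases eq_or_ne l [] with rfl | hne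
  · exact single_nil_mem_degenerate _
  · rw [list_toFinset_map, hψ l.toFinset (List.toFinset_nonempty_iff l |>.2 hne) hl]
    simp

/-- The join of the boundaries of the columns has too small a dimension for a chain map from the
periodic resolution: such a map would make the augmentation `1` a multiple of `p`. -/
theorem IsTower.lt_of_forall_mem_joinChains [Fact p.Prime] [Fintype K] {n : ℕ}
    {w : ℕ → ListChain (ZMod p) (ZMod p × K)} (hw : IsTower rotate p n w)
    (hin : ∀ j ≤ n, w j ∈ joinChains (ZMod p) p K) : n < (p - 1) * Fintype.card K := by
  by_contra! hn
  have htop := mem_degenerate_of_card_lt_length (Nat.lt_succ_of_le hn) (hin n le_rfl)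
    (hw.length n le_rfl)
  obtain ⟨y, b, hyb⟩ := hw.exists_sub_bd_sub_norm_mem
    (fun c hc => altRel_le_degenerate (bd_mem_altRel_of_mem_degenerate hc))
    (fun _ => bd_mem_joinChains) (fun j _ => exists_sub_periodicDiff_mem_degenerate j) hin htop
  have haug := apply_nil_of_mem_altRel (bd_mem_altRel_of_mem_degenerate hyb)
  have hpush : ∀ (i : ℕ) (c : ListChain (ZMod p) (ZMod p × K)),
      bd ((push rotate ^ i : Module.End _ _) c) [] = bd c [] := fun i c => by
    induction i with
    | zero => rfl
    | succ i ih =>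
      rw [pow_succ', Module.End.mul_apply, bd_push, ← ih]
      exact Finsupp.mapDomain_apply (List.map_injective_iff.2 rotate_injective) _ []
  rw [map_sub, map_sub, bd_bd, hw.bd_zero, LinearMap.sum_apply, map_sum, sub_zero,
    Finsupp.sub_apply, Finsupp.finsetSum_apply, Finset.sum_congr rfl fun i _ => hpush i b] at haug
  simp at haug

end JoinChains

end ListChain

/-! ### Labellings -/

section Peaks

variable {p : ℕ} [NeZero p] {L : Type*} [Fintype L]

open Classical in
/-- The positions of the largest entries of a matrix. -/
noncomputable def peaks (y : ZMod p × L → ℝ) : Finset (ZMod p × L) :=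
  Finset.univ.filter fun a => ∀ b, y b ≤ y a

theorem mem_peaks {y : ZMod p × L → ℝ} {a : ZMod p × L} : a ∈ peaks y ↔ ∀ b, y b ≤ y a := by
  simp [peaks]

theorem peaks_nonempty [Nonempty L] (y : ZMod p × L → ℝ) : (peaks y).Nonempty :=
  let ⟨a, ha⟩ := Finite.exists_max y
  ⟨a, mem_peaks.2 ha⟩

theorem peaks_rowShift [DecidableEq L] (y : ZMod p × L → ℝ) :
    peaks (rowShift y) = (peaks y).image rotate := by
  have hrot : Function.Surjective (rotate (p := p) (K := L)) := fun a =>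
    ⟨(a.1 - 1, a.2), by simp [rotate]⟩
  have hval : ∀ a, rowShift y (rotate a) = y a := fun a => by
    simp [rotate, rowShift_apply]
  ext a
  obtain ⟨a, rfl⟩ := hrot a
  rw [rotate_injective.mem_finset_image, mem_peaks, mem_peaks, hrot.forall]
  simp only [hval]

theorem isJoinFace_peaks {y : ZMod p × L → ℝ} (hsum : ∀ l, ∑ i, y (i, l) = 0) (hy : y ≠ 0) :
    IsJoinFace (peaks y) := by
  intro l
  by_contra! h
  have hle : ∀ i l', y (i, l') ≤ 0 := fun i l' => by
    obtain ⟨j, -, hj⟩ := Finset.exists_le_of_sum_le (s := Finset.univ) (f := fun j => y (j, l))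
      (g := fun _ => 0) Finset.univ_nonempty (by simp [hsum])
    exact (mem_peaks.1 (h j) (i, l')).trans hj
  refine hy (funext fun ⟨i, l'⟩ => ?_)
  exact (Finset.sum_eq_zero_iff_of_nonpos fun i _ => hle i l').1 (hsum l') i (Finset.mem_univ i)

theorem isOpen_setOf_peaks_subset (B : Finset (ZMod p × L)) :
    IsOpen {y : ZMod p × L → ℝ | peaks y ⊆ B} := by
  have h : {y : ZMod p × L → ℝ | peaks y ⊆ B} = ⋂ a ∈ (B : Set _)ᶜ, ⋃ b, {y | y a < y b} := by
    ext y
    simp only [Set.mem_ofPred_eq, Finset.subset_iff, mem_peaks, Set.mem_iInter, Set.mem_iUnion,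
      Set.mem_compl_iff, Finset.mem_coe]
    refine forall_congr' fun a => ?_
    rw [← not_imp_not, not_forall]
    simp only [not_le]
  rw [h]
  exact (Set.toFinite _).isOpen_biInter fun a _ => isOpen_iUnion fun b =>
    isOpen_lt (continuous_apply a) (continuous_apply b)

end Peaks

namespace ListChain

section Labelling

open Filter Topology

variable {F : Type*} [CommRing F] {p : ℕ}

theorem push_sd_pow_of_equivariant {E V : Type*} [AddCommGroup E] [Module ℝ E] {σ : E →ᵃ[ℝ] E}
    {U : Set E} {lab : E → V} {τ : V → V} (hlab : ∀ x ∈ U, lab (σ x) = τ (lab x)) (m : ℕ)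
    {c : ListChain F E} (hc : c ∈ inside F U) :
    push lab ((sd ^ m) (push σ c)) = push τ (push lab ((sd ^ m) c)) := by
  rw [← push_sd_pow, push_push, push_push]
  exact push_eq_push_of_supported (S := {l : List E | ∀ v ∈ l, v ∈ U})
    (fun l hl v hv => hlab v (hl v hv)) (inside_le_supported_mem U (sd_pow_mem_inside m hc))

theorem IsTower.push_sd_pow {E V : Type*} [AddCommGroup E] [Module ℝ E] {σ : E →ᵃ[ℝ] E} {U : Set E}
    (hU : Set.MapsTo σ U U) {lab : E → V} {τ : V → V} (hlab : ∀ x ∈ U, lab (σ x) = τ (lab x))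
    {n : ℕ} {w : ℕ → ListChain F E} (hw : IsTower σ p n w) (hin : ∀ j ≤ n, w j ∈ inside F U)
    (m : ℕ) : IsTower τ p n fun j => push lab ((sd ^ m) (w j)) := by
  have hnil : (sd ^ m) (Finsupp.single ([] : List E) (1 : F)) = Finsupp.single [] 1 := by
    induction m with
    | zero => rfl
    | succ m ih => rw [sd_pow_succ, ih, sd_nil]
  exact hw.map (φ := push lab ∘ₗ (sd ^ m : ListChain F E →ₗ[F] ListChain F E)) (S := inside F U)
    (fun c => by simp only [LinearMap.comp_apply, bd_push, bd_sd_pow])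
    (by rw [LinearMap.comp_apply, hnil, push_single, List.map_nil])
    (fun k c hc => push_mem_supported (fun l hl => by simpa using hl)
      (sd_pow_mem_supported_length m hc))
    (fun c hc => push_mem_inside σ hU hc)
    (fun c hc => push_sd_pow_of_equivariant hlab m hc) (fun j hj => hin j hj.le)

theorem push_mem_joinChains_of_mem_iSup {E K ι : Type*} [AddCommGroup E] [Module ℝ E]
    [DecidableEq K] {lab : E → ZMod p × K} {O : ι → Set E}
    (hO : ∀ i, ∃ B, IsJoinFace B ∧ ∀ x ∈ O i, lab x ∈ B) {c : ListChain F E}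
    (hc : c ∈ ⨆ i, inside F (O i)) : push lab c ∈ joinChains F p K := by
  refine (iSup_le fun i => ?_ : _ ≤ (joinChains F p K).comap (push lab)) hc
  obtain ⟨B, hB, hlab⟩ := hO i
  refine (inside_le_supported_mem (O i)).trans fun c hc => ?_
  refine push_mem_supported (fun l hl => hB.mono fun a ha => ?_) hc
  rw [List.mem_toFinset, List.mem_map] at ha
  obtain ⟨v, hv, rfl⟩ := ha
  exact hlab v (hl v hv)

theorem eventually_push_sd_pow_mem_joinChains {E K : Type*} [NormedAddCommGroup E]
    [NormedSpace ℝ E] [DecidableEq K] {U : Set E} {lab : E → ZMod p × K}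
    (hface : ∀ x ∈ U, ∃ B, IsJoinFace B ∧ ∀ᶠ y in 𝓝 x, lab y ∈ B) {c : ListChain F E}
    (hc : c ∈ inside F U) : ∀ᶠ m in atTop, push lab ((sd ^ m) c) ∈ joinChains F p K := by
  let O : {B : Finset (ZMod p × K) // IsJoinFace B} → Set E := fun B => interior {y | lab y ∈ B.1}
  have : Nonempty {B : Finset (ZMod p × K) // IsJoinFace B} := ⟨∅, fun _ => ⟨0, by simp⟩⟩
  have hcover : U ⊆ ⋃ B, O B := fun x hx => by
    obtain ⟨B, hB, hlab⟩ := hface x hx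
    exact Set.mem_iUnion.2 ⟨⟨B, hB⟩, mem_interior_iff_mem_nhds.2 hlab⟩
  exact (eventually_sd_pow_mem_iSup_inside (fun _ => isOpen_interior) hcover hc).mono fun m hm =>
    push_mem_joinChains_of_mem_iSup (O := fun B => U ∩ O B)
      (fun B => ⟨B.1, B.2, fun x hx => interior_subset (s := {y | lab y ∈ B.1}) hx.2⟩) hm

/-- A combinatorial Borsuk–Ulam theorem: on every sufficiently fine subdivision, the labelling
induces a chain map to the join of the columns indexed by `L`, and the identification of opposite
faces lets the top cell of a cube complete the tower of dimension `(p - 1) * card K - 1`. -/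
theorem card_lt_card_of_labelling [Fact p.Prime] {K L : Type*} [Fintype K] [Nonempty K]
    [DecidableEq K] [Fintype L] {lab : (ZMod p × K → ℝ) → ZMod p × L}
    (hface : ∀ x ∈ smallRow p K, ∃ B, IsJoinFace B ∧ ∀ᶠ y in 𝓝 x, lab y ∈ B)
    (hshift : ∀ x ∈ smallRow p K, lab (rowShift x) = rotate (lab x))
    (hopp : ∀ (x : ZMod p × K → ℝ) y, x y = 0 →
      lab (x + Pi.single y 1) = lab (x + Pi.single y (-1))) :
    Fintype.card K < Fintype.card L := by
  classical
  have hpos : 0 < (p - 1) * Fintype.card K :=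
    Nat.mul_pos (Nat.sub_pos_of_lt (Fact.out : p.Prime).one_lt) Fintype.card_pos
  obtain ⟨n, hn⟩ := Nat.exists_eq_add_one.2 hpos
  obtain ⟨w, hw, hin, g, hg, hlen, hgD⟩ :=
    exists_isTower_bd_sub_mem_oppositeFaces (F := ZMod p) hn.symm
  obtain ⟨m, hm, hmg⟩ := (((Filter.eventually_all_finset (Finset.range (n + 1))).2 fun j hj =>
    eventually_push_sd_pow_mem_joinChains hface
      (hin j (Nat.lt_succ_iff.1 (Finset.mem_range.1 hj)))).and
    (eventually_push_sd_pow_mem_joinChains hface hg)).exists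
  have htower := IsTower.push_sd_pow (σ := rowShift.toAffineMap) (fun x => rowShift_mem_smallRow)
    hshift hw hin m
  have hbd : bd (push lab ((sd ^ m) g)) =
      periodicDiff (push rotate) p n (push lab ((sd ^ m) (w n))) := by
    have hzero := push_sd_pow_eq_zero (φ := lab) (fun y _ x hx => by
      simpa only [translate_apply] using hopp x y hx) hgD m
    rw [map_sub, map_sub, sub_eq_zero] at hzero
    rw [bd_push, bd_sd_pow, hzero]
    exact map_periodicDiff (φ := push lab ∘ₗ (sd ^ m : ListChain (ZMod p) _ →ₗ[ZMod p] _))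
      (S := inside (ZMod p) (smallRow p K))
      (fun c => push_rowShift_mem_inside fun x => rowShift_mem_smallRow)
      (fun c => push_sd_pow_of_equivariant (σ := rowShift.toAffineMap) hshift m) p n (hin n le_rfl)
  have hlt := (htower.update (push_mem_supported (fun l hl => by simpa using hl)
    (sd_pow_mem_supported_length m hlen)) hbd).lt_of_forall_mem_joinChains fun j hj => by
      rcases hj.lt_or_eq with hj | rfl
      · rw [Function.update_of_ne hj.ne]
        exact hm j (Finset.mem_range.2 hj)
      · rwa [Function.update_self]
  exact lt_of_mul_lt_mul_left (hn.trans_lt hlt) (Nat.zero_le (p - 1))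

theorem card_lt_card_of_equivariant [Fact p.Prime] {K L : Type*} [Fintype K] [Nonempty K]
    [DecidableEq K] [Fintype L] {H : (ZMod p × K → ℝ) → ZMod p × L → ℝ}
    (hcont : ContinuousOn H (smallRow p K))
    (hsum : ∀ x ∈ smallRow p K, ∀ l, ∑ i, H x (i, l) = 0) (hne : ∀ x ∈ smallRow p K, H x ≠ 0)
    (hshift : ∀ x ∈ smallRow p K, H (rowShift x) = rowShift (H x))
    (hopp : ∀ (x : ZMod p × K → ℝ) y, x y = 0 →
      H (x + Pi.single y 1) = H (x + Pi.single y (-1))) :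
    Fintype.card K < Fintype.card L := by
  classical
  have : Nonempty L := by
    obtain ⟨k⟩ := ‹Nonempty K›
    obtain ⟨y, -⟩ := Function.ne_iff.1
      (hne _ (single_mem_smallRow (y := ((1 : ZMod p), k)) one_ne_zero))
    exact ⟨y.2⟩
  obtain ⟨s, hs⟩ := exists_equivariant_selection (p := p) (K := L)
  have hpeaks : ∀ x ∈ smallRow p K, IsJoinFace (peaks (H x)) := fun x hx =>
    isJoinFace_peaks (hsum x hx) (hne x hx)
  refine card_lt_card_of_labelling (lab := fun x => s (peaks (H x)))
    (fun x hx => ⟨peaks (H x), hpeaks x hx, ?_⟩) (fun x hx => ?_) fun x y hxy => ?_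
  · have hnhds := isOpen_smallRow.mem_nhds hx
    filter_upwards [hnhds, (hcont.continuousAt hnhds).eventually_mem
      ((isOpen_setOf_peaks_subset (peaks (H x))).mem_nhds (Finset.Subset.refl _))] with y hy hsub
    exact hsub (hs _ (peaks_nonempty _) (hpeaks y hy)).1
  · rw [hshift x hx, peaks_rowShift]
    exact (hs _ (peaks_nonempty _) (hpeaks x hx)).2
  · rw [hopp x y hxy]

end Labelling

end ListChain

/-! ### Configurations on the sphere -/

section Collapse

open NormedSpace

variable {d : ℕ}

/-- A nonzero vector pointing towards `collapse y`: in terms of `t = ‖y‖` and `s = max 0 (1 - t)`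
its first coordinate and the norm of the remaining ones are the real and imaginary parts
of `(t + i s) ^ 2`. -/
noncomputable def collapseDirection (y : Fin d → ℝ) : EuclideanSpace ℝ (Fin (d + 1)) :=
  WithLp.toLp 2 (Fin.cons (‖y‖ ^ 2 - max 0 (1 - ‖y‖) ^ 2) ((2 * max 0 (1 - ‖y‖)) • y))

theorem collapseDirection_of_one_le {y : Fin d → ℝ} (hy : 1 ≤ ‖y‖) :
    collapseDirection y = ‖y‖ ^ 2 • WithLp.toLp 2 (Fin.cons 1 0) := by
  ext i
  refine Fin.cases ?_ (fun k => ?_) i <;> simp [collapseDirection, hy]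

theorem continuous_collapseDirection : Continuous (collapseDirection (d := d)) := by
  refine (PiLp.continuous_toLp 2 _).comp (continuous_pi fun i => ?_)
  refine Fin.cases ?_ (fun k => ?_) i
  · simp only [Fin.cons_zero]; fun_prop
  · simp only [Fin.cons_succ, Pi.smul_apply]; fun_prop

theorem norm_sq_eq_of_collapseDirection_eq_smul {y y' : Fin d → ℝ} {c : ℝ} (hc : 0 ≤ c)
    (h : collapseDirection y = c • collapseDirection y') :
    ‖y‖ ^ 2 = c * ‖y'‖ ^ 2 ∧ max 0 (1 - ‖y‖) ^ 2 = c * max 0 (1 - ‖y'‖) ^ 2 := by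
  have hre : ‖y‖ ^ 2 - max 0 (1 - ‖y‖) ^ 2 = c * (‖y'‖ ^ 2 - max 0 (1 - ‖y'‖) ^ 2) :=
    congrArg (fun v => v 0) h
  have him : (2 * max 0 (1 - ‖y‖)) • y = c • (2 * max 0 (1 - ‖y'‖)) • y' :=
    funext fun k => congrArg (fun v => v k.succ) h
  replace him := congrArg norm him
  have hs : ∀ t : ℝ, 0 ≤ 2 * max 0 (1 - t) := fun t => by positivity
  rw [norm_smul, norm_smul, norm_smul, Real.norm_of_nonneg hc, Real.norm_of_nonneg (hs _),
    Real.norm_of_nonneg (hs _)] at him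
  have habs : ‖y‖ ^ 2 + max 0 (1 - ‖y‖) ^ 2 = c * (‖y'‖ ^ 2 + max 0 (1 - ‖y'‖) ^ 2) := by
    refine (pow_left_inj₀ (by positivity) (by positivity) two_ne_zero).1 ?_
    linear_combination (‖y‖ ^ 2 - max 0 (1 - ‖y‖) ^ 2 + c * (‖y'‖ ^ 2 - max 0 (1 - ‖y'‖) ^ 2)) * hre
      + (2 * max 0 (1 - ‖y‖) * ‖y‖ + c * (2 * max 0 (1 - ‖y'‖) * ‖y'‖)) * him
  constructor <;> linarith

theorem collapseDirection_ne_zero (y : Fin d → ℝ) : collapseDirection y ≠ 0 := fun h => by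
  obtain ⟨ht, hs⟩ := norm_sq_eq_of_collapseDirection_eq_smul (y := y) (y' := y) le_rfl
    (h.trans (zero_smul ℝ _).symm)
  rw [zero_mul, sq_eq_zero_iff] at ht hs
  simp [ht] at hs

/-- A map from `ℝᵈ` to the sphere that is injective on the open unit ball of the maximum norm and
collapses the complement of that ball to one further point. -/
noncomputable def collapse (y : Fin d → ℝ) :
    Metric.sphere (0 : EuclideanSpace ℝ (Fin (d + 1))) 1 :=
  ⟨normalize (collapseDirection y), by
    rw [mem_sphere_zero_iff_norm, norm_normalize_eq_one_iff]
    exact collapseDirection_ne_zero y⟩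

theorem continuous_collapse : Continuous (collapse (d := d)) :=
  Continuous.subtype_mk ((continuous_collapseDirection.norm.inv₀ fun y =>
    norm_ne_zero_iff.2 (collapseDirection_ne_zero y)).smul continuous_collapseDirection) _

theorem eq_of_collapse_eq {y y' : Fin d → ℝ} (hy : ‖y‖ < 1) (h : collapse y = collapse y') :
    y = y' := by
  obtain ⟨c, hc, hdir⟩ := ((sameRay_iff_inv_norm_smul_eq_of_ne (collapseDirection_ne_zero y')
    (collapseDirection_ne_zero y)).2 (congrArg Subtype.val h).symm).exists_pos_left
      (collapseDirection_ne_zero y') (collapseDirection_ne_zero y)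
  obtain ⟨ht, hs⟩ := norm_sq_eq_of_collapseDirection_eq_smul hc.le hdir.symm
  have hsqrt : ∀ {a b : ℝ}, 0 ≤ a → 0 ≤ b → a ^ 2 = c * b ^ 2 → a = √c * b := fun ha hb hab =>
    (pow_left_inj₀ ha (by positivity) two_ne_zero).1 (by rw [hab, mul_pow, Real.sq_sqrt hc.le])
  replace ht := hsqrt (norm_nonneg y) (norm_nonneg y') ht
  replace hs := hsqrt (le_max_left _ _) (le_max_left _ _) hs
  rw [max_eq_right (by linarith : (0 : ℝ) ≤ 1 - ‖y‖)] at hs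
  have hy' : ‖y'‖ < 1 := by
    by_contra! hy'
    rw [max_eq_left (by linarith), mul_zero] at hs
    linarith
  rw [max_eq_right (by linarith : (0 : ℝ) ≤ 1 - ‖y'‖)] at hs
  have hroot : √c = 1 := by linarith
  rw [Real.sqrt_eq_one] at hroot
  rw [hroot, Real.sqrt_one, one_mul] at ht
  rw [hroot, one_smul] at hdir
  have him : (2 * max 0 (1 - ‖y'‖)) • y' = (2 * max 0 (1 - ‖y‖)) • y :=
    funext fun k => congrArg (fun v => v k.succ) hdir
  rw [ht, max_eq_right (by linarith)] at him
  exact (smul_right_injective _ (by linarith : 2 * (1 - ‖y'‖) ≠ 0) him).symm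

theorem collapse_eq_of_one_le {y y' : Fin d → ℝ} (hy : 1 ≤ ‖y‖) (hy' : 1 ≤ ‖y'‖) :
    collapse y = collapse y' := by
  refine Subtype.ext ?_
  change normalize (collapseDirection y) = normalize (collapseDirection y')
  rw [collapseDirection_of_one_le hy, collapseDirection_of_one_le hy',
    normalize_smul_of_pos (by positivity), normalize_smul_of_pos (by positivity)]

end Collapse

section Configuration

variable {p d : ℕ}

/-- The `p` points of the sphere given by the rows of a matrix. -/
noncomputable def configuration (x : ZMod p × Fin d → ℝ) (i : ZMod p) :
    Metric.sphere (0 : EuclideanSpace ℝ (Fin (d + 1))) 1 :=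
  collapse fun k => x (i, k)

theorem continuous_configuration : Continuous (configuration (p := p) (d := d)) :=
  continuous_pi fun _ => continuous_collapse.comp (by fun_prop)

theorem configuration_rowShift (x : ZMod p × Fin d → ℝ) (i : ZMod p) :
    configuration (rowShift x) i = configuration x (i - 1) := rfl

theorem exists_configuration_ne {x : ZMod p × Fin d → ℝ} (hx : x ∈ smallRow p (Fin d)) :
    ∃ i j, configuration x i ≠ configuration x j := by
  obtain ⟨hrow, i, hi⟩ := hx
  by_contra! hconst
  have heq : ∀ j k, x (i, k) = x (j, k) := fun j k =>
    congrFun (eq_of_collapse_eq ((pi_norm_lt_iff one_pos).2 hi) (hconst i j)) k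
  exact hrow (subRow_eq_zero_iff.2 fun j j' k => (heq j k).symm.trans (heq j' k))

theorem deletedProductShift_configuration_rowShift {x : ZMod p × Fin d → ℝ}
    (hx : x ∈ smallRow p (Fin d)) :
    deletedProductShift
        ⟨configuration (rowShift x), exists_configuration_ne (rowShift_mem_smallRow hx)⟩ =
      ⟨configuration x, exists_configuration_ne hx⟩ :=
  Subtype.ext <| funext fun i => by
    change configuration (rowShift x) (i + 1) = configuration x i
    rw [configuration_rowShift, add_sub_cancel_right]

theorem configuration_add_single [NeZero p] {x : ZMod p × Fin d → ℝ} {y : ZMod p × Fin d}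
    (hy : x y = 0) : configuration (x + Pi.single y 1) = configuration (x + Pi.single y (-1)) := by
  have hlarge : ∀ a : ℝ, |a| = 1 → 1 ≤ ‖fun k => (x + Pi.single y a : _ → ℝ) (y.1, k)‖ :=
    fun a ha => le_trans (by simp [hy, ha]) (norm_le_pi_norm _ y.2)
  funext i
  by_cases hi : i = y.1
  · subst hi
    exact collapse_eq_of_one_le (hlarge 1 (by simp)) (hlarge (-1) (by simp))
  · have hne : ∀ k, (i, k) ≠ y := fun k e => hi (congrArg Prod.fst e)
    exact congrArg collapse (funext fun k => by simp [hne])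

theorem lt_card_of_equivariant_deletedProduct [Fact p.Prime] (hd : 1 ≤ d) {L : Type*} [Fintype L]
    {h : {f : ZMod p → Metric.sphere (0 : EuclideanSpace ℝ (Fin (d + 1))) 1 //
      ∃ k k', f k ≠ f k'} → (L → ZMod p → ℝ)}
    (hcont : Continuous h) (hsum : ∀ x i, ∑ k, h x i k = 0) (hne : ∀ x, h x ≠ 0)
    (hshift : ∀ x, h (deletedProductShift x) = fun i k => h x i (k + 1)) :
    d < Fintype.card L := by
  classical
  let G (f : ZMod p → Metric.sphere (0 : EuclideanSpace ℝ (Fin (d + 1))) 1) : ZMod p × L → ℝ :=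
    if hf : ∃ k k', f k ≠ f k' then fun y => h ⟨f, hf⟩ y.2 y.1 else 0
  have hG : ∀ {x : ZMod p × Fin d → ℝ} (hx : x ∈ smallRow p (Fin d)) (y : ZMod p × L),
      G (configuration x) y = h ⟨configuration x, exists_configuration_ne hx⟩ y.2 y.1 :=
    fun hx y => congrFun (dif_pos (exists_configuration_ne hx)) y
  have : Nonempty (Fin d) := Fin.pos_iff_nonempty.1 hd
  have hlt : Fintype.card (Fin d) < Fintype.card L := by
    refine ListChain.card_lt_card_of_equivariant (p := p) (H := fun x => G (configuration x))
      ?_ (fun x hx l => ?_) (fun x hx hzero => ?_) (fun x hx => ?_)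
      fun x y hxy => congrArg G (configuration_add_single hxy)
    · rw [continuousOn_iff_continuous_domRestrict]
      have hconf : Continuous fun x : smallRow p (Fin d) => h ⟨_, exists_configuration_ne x.2⟩ :=
        hcont.comp ((continuous_configuration.comp continuous_subtype_val).subtype_mk _)
      refine (continuous_pi fun y => ?_ : Continuous fun (x : smallRow p (Fin d)) y =>
        h ⟨_, exists_configuration_ne x.2⟩ y.2 y.1).congr fun x => (funext (hG x.2)).symm
      exact (continuous_apply_apply y.2 y.1).comp hconf
    · simpa only [hG hx] using hsum _ l
    · exact hne _ (funext₂ fun l i => (hG hx (i, l)).symm.trans (congrFun hzero _))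
    · funext y
      rw [hG (rowShift_mem_smallRow hx), rowShift_apply, hG hx,
        ← deletedProductShift_configuration_rowShift hx, hshift]
      simp only [sub_add_cancel]
  simpa using hlt

end Configuration

theorem no_equivariant_map_deleted_product_to_sphere_general
    (p d r : ℕ) [NeZero p] (hp : p.Prime) (hd : 1 ≤ d) (hrd : r ≤ d) :
    ¬ ∃ h : {f : ZMod p → Metric.sphere (0 : EuclideanSpace ℝ (Fin (d + 1))) 1 //
          ∃ k k', f k ≠ f k'} → (Fin r → ZMod p → ℝ),
      Continuous h ∧
      (∀ x, (∀ i : Fin r, ∑ k : ZMod p, h x i k = 0) ∧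
        ∑ i : Fin r, ∑ k : ZMod p, (h x i k) ^ 2 = 1) ∧
      (∀ x, h (deletedProductShift x) = fun i k => h x i (k + 1)) := by
  rintro ⟨h, hcont, hsphere, hshift⟩
  have : Fact p.Prime := ⟨hp⟩
  have hne : ∀ x, h x ≠ 0 := fun x hx => by simpa [hx] using (hsphere x).2
  have hlt := lt_card_of_equivariant_deletedProduct hd hcont (fun x => (hsphere x).1) hne hshift
  exact hrd.not_gt (by simpa using hlt)

/-- Proposition: if `r ≤ d` and `r(p-1) ≠ jd + 1` for all `j = 1, …, p-1`, then there
is no `ℤ/p`-equivariant continuous map `X_{d,p} → S((Δʳ)^⊥)`. -/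
theorem no_equivariant_map_deleted_product_to_sphere
    (p d r : ℕ) [NeZero p] (hp : p.Prime) (hodd : Odd p) (hd : 1 ≤ d) (hr : 1 ≤ r)
    (hrd : r ≤ d)
    (hjd : ∀ j : ℕ, 1 ≤ j → j ≤ p - 1 → r * (p - 1) ≠ j * d + 1) :
    ¬ ∃ h : {f : ZMod p → Metric.sphere (0 : EuclideanSpace ℝ (Fin (d + 1))) 1 //
          ∃ k k', f k ≠ f k'} → (Fin r → ZMod p → ℝ),
      Continuous h ∧
      (∀ x, (∀ i : Fin r, ∑ k : ZMod p, h x i k = 0) ∧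
        ∑ i : Fin r, ∑ k : ZMod p, (h x i k) ^ 2 = 1) ∧
      (∀ x, h (deletedProductShift x) = fun i k => h x i (k + 1)) :=
  no_equivariant_map_deleted_product_to_sphere_general p d r hp hd hrd
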